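/- arXiv:cs/0510017 — 4 statements merged into one kernel-verified Lean document; each statement's English description precedes it below -/
import Mathlib

section
/- In the Poissonized model with parameter λ > 0, for every k: Var(X_k(λ)) < 2^k, hence Var(X̄_k(λ)) < 2^{−k}, and by Chebyshev's inequality P(|X̄_k(λ) − E X̄_k(λ)| > 2^{−k/3}) ≤ 2^{−k/3}, which tends to 0 as k → ∞. -/
/-!
Poissonized model for partial fillup in tries (Janson–Szpankowski).

An outcome `ω : ℕ × (ℕ → ℕ → Bool)` consists of the number `ω.1 = N` of inserted
strings and a source `ω.2` of infinitely many strings, where `ω.2 i j` is the `j`-th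
bit of the `i`-th string; the inserted strings are the strings `0, …, N-1`.  Under the
Poissonized measure, `N ~ Po(λ)` is independent of the strings, and all bits are
i.i.d. with `P(bit = 1) = p`.
-/

open MeasureTheory ProbabilityTheory Real Filter

/-- The number of strings among the first `n` (encoded in `ω`) whose first `k` bits
form the word `r ∈ {0,1}^k`. -/
def prefCount (ω : ℕ → ℕ → Bool) (n k : ℕ) (r : Fin k → Bool) : ℕ :=
  ((Finset.range n).filter fun i => ∀ j : Fin k, ω i j = r j).card

/-- `X_k`: the number of words `r ∈ {0,1}^k` that are prefixes of at least two of the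
first `n` strings. -/
def fillCount (ω : ℕ → ℕ → Bool) (n k : ℕ) : ℕ :=
  (Finset.univ.filter fun r : Fin k → Bool => 2 ≤ prefCount ω n k r).card

/-- `ν` is a probability measure on `ℕ → ℕ → Bool` under which all the bits
`ω i j` are i.i.d. with `P(bit = 1) = p` (characterized by cylinder probabilities). -/
def IIDBits (p : ℝ) (ν : Measure (ℕ → ℕ → Bool)) : Prop :=
  IsProbabilityMeasure ν ∧
    ∀ (S : Finset (ℕ × ℕ)) (b : ℕ × ℕ → Bool),
      ν {ω | ∀ s ∈ S, ω s.1 s.2 = b s} =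
        ∏ s ∈ S, ENNReal.ofReal (if b s then p else 1 - p)

/-- The Poissonized model: the number of inserted strings is `Po(λ)`, independent of the
i.i.d. source `ν` of strings. -/
noncomputable def poModel (lam : NNReal) (ν : Measure (ℕ → ℕ → Bool)) :
    Measure (ℕ × (ℕ → ℕ → Bool)) :=
  (ProbabilityTheory.poissonMeasure lam).prod ν

/-- `X_k(λ)` as a random variable on the Poissonized model: the number of words
`r ∈ {0,1}^k` that are prefixes of at least two of the `N` inserted strings. -/
def fillCountPo (k : ℕ) (ω : ℕ × (ℕ → ℕ → Bool)) : ℕ :=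
  fillCount ω.2 ω.1 k

/-- `X̄_k(λ) = X_k(λ) / 2^k`. -/
noncomputable def fracFilledPo (k : ℕ) (ω : ℕ × (ℕ → ℕ → Bool)) : ℝ :=
  (fillCountPo k ω : ℝ) / 2 ^ k

/-- The first `k` bits of string `i`. -/
def prefWord (k : ℕ) (i : ℕ) (ω : ℕ → ℕ → Bool) : Fin k → Bool := fun j => ω i j

lemma measurable_prefWord (k i : ℕ) : Measurable (prefWord k i) := by
  unfold prefWord
  fun_prop

lemma nu_prefWords {p : ℝ} {ν : Measure (ℕ → ℕ → Bool)} (hν : IIDBits p ν) (k n : ℕ) (a : ℕ)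
    (w : Fin n → Fin k → Bool) :
    ν {ω | ∀ i : Fin n, prefWord k (a + i) ω = w i} =
      ∏ i : Fin n, ∏ j : Fin k, ENNReal.ofReal (if w i j then p else 1 - p) := by
  classical
  let b : ℕ × ℕ → Bool := fun s =>
    if h : s.1 - a < n ∧ s.2 < k then w ⟨s.1 - a, h.1⟩ ⟨s.2, h.2⟩ else false
  have hinj : Function.Injective (fun s : Fin n × Fin k => ((a + s.1 : ℕ), (s.2 : ℕ))) := by
    rintro ⟨i, j⟩ ⟨i', j'⟩ h
    simp only [Prod.mk.injEq] at h
    ext <;> simp <;> omega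
  have hb : ∀ (i : Fin n) (j : Fin k), b (a + i, j) = w i j := by
    intro i j
    simp [b]
  have h := hν.2 (Finset.univ.map ⟨_, hinj⟩) b
  rw [Finset.prod_map, Fintype.prod_prod_type] at h
  simp only [Function.Embedding.coeFn_mk, hb] at h
  rw [← h]
  congr 1
  ext ω
  simp only [Set.mem_ofPred_eq, prefWord, funext_iff, Finset.mem_map, Finset.mem_univ, true_and,
    Function.Embedding.coeFn_mk]
  constructor
  · rintro h _ ⟨⟨i, j⟩, rfl⟩
    rw [hb]
    exact h i j
  · intro h i j
    rw [← hb]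
    exact h _ ⟨(i, j), rfl⟩

lemma map_prefWords {p : ℝ} {ν : Measure (ℕ → ℕ → Bool)} (hν : IIDBits p ν) (k n : ℕ) :
    ν.map (fun ω (i : Fin n) => prefWord k i ω) =
      Measure.pi (fun _ : Fin n => ν.map (prefWord k 0)) := by
  have := hν.1
  have : IsProbabilityMeasure (ν.map (prefWord k 0)) :=
    Measure.isProbabilityMeasure_map (measurable_prefWord k 0).aemeasurable
  have hm : Measurable (fun ω (i : Fin n) => prefWord k i ω) :=
    measurable_pi_lambda _ fun i => measurable_prefWord k i
  refine Measure.ext_of_singleton fun w => ?_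
  rw [Measure.pi_singleton, Measure.map_apply hm (measurableSet_singleton _)]
  have h1 := nu_prefWords hν k n 0 w
  have h2 : ∀ i, (ν.map (prefWord k 0)) {w i} =
      ∏ j : Fin k, ENNReal.ofReal (if w i j then p else 1 - p) := by
    intro i
    rw [Measure.map_apply (measurable_prefWord k 0) (measurableSet_singleton _)]
    have := nu_prefWords hν k 1 0 (fun _ => w i)
    simp only [Finset.univ_unique, Finset.prod_singleton] at this
    rw [← this]
    congr 1
    ext ω
    simp
  simp only [h2]
  rw [← h1]
  congr 1
  ext ω
  simp [funext_iff]

lemma integral_prod_prefWords {p : ℝ} {ν : Measure (ℕ → ℕ → Bool)} (hν : IIDBits p ν) (k n : ℕ)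
    (g : (Fin k → Bool) → ℂ) :
    ∫ ω, ∏ i ∈ Finset.range n, g (prefWord k i ω) ∂ν =
      (∫ w, g w ∂(ν.map (prefWord k 0))) ^ n := by
  have := hν.1
  have : IsProbabilityMeasure (ν.map (prefWord k 0)) :=
    Measure.isProbabilityMeasure_map (measurable_prefWord k 0).aemeasurable
  have hm : Measurable (fun ω (i : Fin n) => prefWord k i ω) :=
    measurable_pi_lambda _ fun i => measurable_prefWord k i
  have h := integral_fintype_prod_eq_prod (𝕜 := ℂ) (fun _ : Fin n => g)
    (μ := fun _ : Fin n => ν.map (prefWord k 0))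
  rw [← map_prefWords hν k n, integral_map hm.aemeasurable .of_discrete] at h
  simp only [Finset.prod_range]
  rw [h]
  simp

lemma integral_pow_poisson (lam : NNReal) (m : ℂ) :
    ∫ n, m ^ n ∂(poissonMeasure lam) = Complex.exp (lam * (m - 1)) := by
  rw [integral_poissonMeasure lam]
  calc ∑' a : ℕ, (rexp (-lam) * lam ^ a / a.factorial : ℝ) • m ^ a
  _ = ∑' a : ℕ, ((rexp (-lam) : ℝ) : ℂ) * ((lam * m) ^ a / a.factorial) := by
      congr with a
      rw [Complex.real_smul]
      push_cast
      rw [mul_pow]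
      ring
  _ = ((rexp (-lam) : ℝ) : ℂ) * ∑' a : ℕ, ((lam * m) ^ a / a.factorial : ℂ) := tsum_mul_left
  _ = ((rexp (-lam) : ℝ) : ℂ) * Complex.exp (lam * m) := by
      rw [(NormedSpace.expSeries_div_hasSum_exp ((lam : ℂ) * m)).tsum_eq, Complex.exp_eq_exp_ℂ]
  _ = Complex.exp (lam * (m - 1)) := by
      rw [Complex.ofReal_exp, ← Complex.exp_add]
      push_cast
      ring_nf

/-- Number of inserted strings with prefix `r`, as a real random variable. -/
noncomputable def cnt (k : ℕ) (r : Fin k → Bool) (ω : ℕ × (ℕ → ℕ → Bool)) : ℝ :=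
  (prefCount ω.2 ω.1 k r : ℝ)

lemma cnt_eq (k : ℕ) (r : Fin k → Bool) (n : ℕ) (ω : ℕ → ℕ → Bool) :
    cnt k r (n, ω) = ∑ i ∈ Finset.range n, if prefWord k i ω = r then (1 : ℝ) else 0 := by
  simp [cnt, prefCount, prefWord, funext_iff]

lemma measurable_cnt (k : ℕ) (r : Fin k → Bool) : Measurable (cnt k r) := by
  refine measurable_from_prod_countable_right fun n => ?_
  simp only [cnt_eq]
  refine Finset.measurable_sum _ fun i _ => ?_
  exact (Measurable.of_discrete (f := fun w : Fin k → Bool => if w = r then (1 : ℝ) else 0)).comp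
    (measurable_prefWord k i)

lemma joint_char {p : ℝ} {ν : Measure (ℕ → ℕ → Bool)} (hν : IIDBits p ν) (lam : NNReal) (k : ℕ)
    {r s : Fin k → Bool} (hrs : r ≠ s) (t u : ℝ) :
    ∫ ω, Complex.exp (((t * cnt k r ω + u * cnt k s ω : ℝ) : ℂ) * Complex.I) ∂(poModel lam ν) =
      Complex.exp (lam * (((ν.map (prefWord k 0)).real {r} : ℂ) * (Complex.exp (t * Complex.I) - 1)
        + ((ν.map (prefWord k 0)).real {s} : ℂ) * (Complex.exp (u * Complex.I) - 1))) := by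
  have := hν.1
  have : IsProbabilityMeasure (ν.map (prefWord k 0)) :=
    Measure.isProbabilityMeasure_map (measurable_prefWord k 0).aemeasurable
  have hmr := measurable_cnt k r
  have hms := measurable_cnt k s
  have hint : Integrable (fun ω : ℕ × (ℕ → ℕ → Bool) =>
      Complex.exp (((t * cnt k r ω + u * cnt k s ω : ℝ) : ℂ) * Complex.I))
      ((poissonMeasure lam).prod ν) := by
    refine Integrable.of_bound (C := 1) (by fun_prop) (ae_of_all _ fun ω => ?_)
    rw [Complex.norm_exp_ofReal_mul_I]
  unfold poModel
  rw [integral_prod _ hint]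
  let g : (Fin k → Bool) → ℂ := fun w =>
    1 + (({r} : Set (Fin k → Bool)).indicator (fun _ => Complex.exp (t * Complex.I) - 1) w
      + ({s} : Set (Fin k → Bool)).indicator (fun _ => Complex.exp (u * Complex.I) - 1) w)
  have hg : ∀ n ω, Complex.exp (((t * cnt k r (n, ω) + u * cnt k s (n, ω) : ℝ) : ℂ) * Complex.I)
      = ∏ i ∈ Finset.range n, g (prefWord k i ω) := by
    intro n ω
    rw [cnt_eq, cnt_eq, Finset.mul_sum, Finset.mul_sum, ← Finset.sum_add_distrib,
      Complex.ofReal_sum, Finset.sum_mul, Complex.exp_sum]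
    refine Finset.prod_congr rfl fun i _ => ?_
    by_cases h1 : prefWord k i ω = r
    · have h2 : prefWord k i ω ≠ s := h1 ▸ hrs
      simp [g, h1, hrs]
    · by_cases h2 : prefWord k i ω = s
      · simp [g, h2, hrs.symm]
      · simp [g, h1, h2]
  simp only [hg, integral_prod_prefWords hν, integral_pow_poisson]
  congr 2
  simp only [g]
  rw [integral_add .of_finite .of_finite, integral_add .of_finite .of_finite,
    integral_indicator_const _ (measurableSet_singleton _),
    integral_indicator_const _ (measurableSet_singleton _)]
  simp

lemma indep_cnt {p : ℝ} {ν : Measure (ℕ → ℕ → Bool)} (hν : IIDBits p ν) (lam : NNReal) (k : ℕ)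
    {r s : Fin k → Bool} (hrs : r ≠ s) :
    IndepFun (cnt k r) (cnt k s) (poModel lam ν) := by
  have := hν.1
  have : IsProbabilityMeasure (poModel lam ν) := by unfold poModel; infer_instance
  have hmr := measurable_cnt k r
  have hms := measurable_cnt k s
  rw [indepFun_iff_charFun_prod hmr.aemeasurable hms.aemeasurable]
  intro t
  have h := joint_char hν lam k hrs
  have h1 := h t.ofLp.1 0
  have h2 := h 0 t.ofLp.2
  have h3 := h t.ofLp.1 t.ofLp.2
  rw [charFun_apply, charFun_apply, charFun_apply, integral_map (by fun_prop) (by fun_prop),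
    integral_map (by fun_prop) (by fun_prop), integral_map (by fun_prop) (by fun_prop)]
  simp only [zero_mul, add_zero, zero_add, Complex.ofReal_zero, Complex.exp_zero, sub_self,
    mul_zero] at h1 h2
  simp only [WithLp.prod_inner_apply, Real.inner_apply, mul_comm (cnt _ _ _)]
  rw [h1, h2, h3, ← Complex.exp_add]
  ring_nf

/-- Indicator that `r` is a prefix of at least two strings. -/
noncomputable def ind (k : ℕ) (r : Fin k → Bool) (ω : ℕ × (ℕ → ℕ → Bool)) : ℝ :=
  if 2 ≤ cnt k r ω then 1 else 0

lemma measurable_ind (k : ℕ) (r : Fin k → Bool) : Measurable (ind k r) :=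
  Measurable.ite (measurableSet_le measurable_const (measurable_cnt k r))
    measurable_const measurable_const

lemma ind_mem (k : ℕ) (r : Fin k → Bool) (ω) : ind k r ω ∈ Set.Icc (0 : ℝ) 1 := by
  unfold ind
  split_ifs <;> simp

lemma fillCountPo_eq (k : ℕ) :
    (fun ω => (fillCountPo k ω : ℝ)) = ∑ r : Fin k → Bool, ind k r := by
  ext ω
  simp [fillCountPo, fillCount, ind, cnt]

lemma memLp_ind {ν : Measure (ℕ → ℕ → Bool)} [IsProbabilityMeasure ν] (lam : NNReal) (k : ℕ)
    (r : Fin k → Bool) : MemLp (ind k r) 2 (poModel lam ν) := by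
  have : IsProbabilityMeasure (poModel lam ν) := by unfold poModel; infer_instance
  refine MemLp.of_bound (measurable_ind k r).aestronglyMeasurable 1 (ae_of_all _ fun ω => ?_)
  have := ind_mem k r ω
  rw [Real.norm_eq_abs, abs_le]
  constructor <;> linarith [this.1, this.2]

lemma var_fill {p : ℝ} {ν : Measure (ℕ → ℕ → Bool)} (hν : IIDBits p ν) (lam : NNReal) (k : ℕ) :
    variance (fun ω => (fillCountPo k ω : ℝ)) (poModel lam ν) < 2 ^ k := by
  have := hν.1
  have : IsProbabilityMeasure (poModel lam ν) := by unfold poModel; infer_instance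
  rw [fillCountPo_eq, IndepFun.variance_sum (fun r _ => memLp_ind lam k r)]
  · calc ∑ r : Fin k → Bool, variance (ind k r) (poModel lam ν)
        ≤ ∑ r : Fin k → Bool, ((1 - 0) / 2 : ℝ) ^ 2 := Finset.sum_le_sum fun r _ =>
          variance_le_sq_of_bounded (ae_of_all _ (ind_mem k r)) (measurable_ind k r).aemeasurable
      _ < 2 ^ k := by
        have : (0 : ℝ) < 2 ^ k := by positivity
        simp
        nlinarith
  · intro r _ s _ hrs
    have hm : Measurable (fun x : ℝ => if 2 ≤ x then (1 : ℝ) else 0) :=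
      Measurable.ite measurableSet_Ici measurable_const measurable_const
    exact (indep_cnt hν lam k hrs).comp hm hm

lemma var_frac {p : ℝ} {ν : Measure (ℕ → ℕ → Bool)} (hν : IIDBits p ν) (lam : NNReal) (k : ℕ) :
    variance (fracFilledPo k) (poModel lam ν) < ((2 : ℝ) ^ k)⁻¹ := by
  have h := var_fill hν lam k
  have e : fracFilledPo k = fun ω => ((2 : ℝ) ^ k)⁻¹ * (fillCountPo k ω : ℝ) := by
    ext ω
    rw [fracFilledPo, div_eq_inv_mul]
  rw [e, variance_const_mul]
  have h2 : (0 : ℝ) < 2 ^ k := by positivity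
  calc (((2 : ℝ) ^ k)⁻¹) ^ 2 * variance (fun ω => (fillCountPo k ω : ℝ)) (poModel lam ν)
      < (((2 : ℝ) ^ k)⁻¹) ^ 2 * 2 ^ k := by gcongr
    _ = ((2 : ℝ) ^ k)⁻¹ := by field_simp

lemma memLp_frac {ν : Measure (ℕ → ℕ → Bool)} [IsProbabilityMeasure ν] (lam : NNReal) (k : ℕ) :
    MemLp (fracFilledPo k) 2 (poModel lam ν) := by
  have e : fracFilledPo k = fun ω => ((2 : ℝ) ^ k)⁻¹ * (fillCountPo k ω : ℝ) := by
    ext ω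
    rw [fracFilledPo, div_eq_inv_mul]
  rw [e]
  refine MemLp.const_mul ?_ _
  rw [fillCountPo_eq]
  exact memLp_finsetSum' _ fun r _ => memLp_ind lam k r

/-- In the Poissonized model: `Var(X_k(λ)) < 2^k`, hence `Var(X̄_k(λ)) < 2^{-k}`, and by
Chebyshev's inequality `P(|X̄_k(λ) - E X̄_k(λ)| > 2^{-k/3}) ≤ 2^{-k/3} → 0` as `k → ∞`. -/
theorem variance_fillCountPo
    (p q : ℝ) (hp : 0 < p) (hp1 : p < 1) (hq : q = 1 - p)
    (lam : NNReal) (hlam : 0 < lam)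
    (ν : Measure (ℕ → ℕ → Bool)) (hν : IIDBits p ν) :
    (∀ k : ℕ,
      variance (fun ω => (fillCountPo k ω : ℝ)) (poModel lam ν) < 2 ^ k) ∧
    (∀ k : ℕ,
      variance (fracFilledPo k) (poModel lam ν) < ((2 : ℝ) ^ k)⁻¹) ∧
    (∀ k : ℕ,
      poModel lam ν
          {ω | (2 : ℝ) ^ (-(k : ℝ) / 3) <
            |fracFilledPo k ω - ∫ ω', fracFilledPo k ω' ∂poModel lam ν|}
        ≤ ENNReal.ofReal ((2 : ℝ) ^ (-(k : ℝ) / 3))) ∧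
    Tendsto (fun k : ℕ => (2 : ℝ) ^ (-(k : ℝ) / 3)) atTop (nhds 0) := by
  have := hν.1
  have : IsProbabilityMeasure (poModel lam ν) := by unfold poModel; infer_instance
  refine ⟨var_fill hν lam, var_frac hν lam, fun k => ?_, ?_⟩
  · have hc : (0 : ℝ) < (2 : ℝ) ^ (-(k : ℝ) / 3) := by positivity
    refine le_trans (measure_mono ?_)
      ((meas_ge_le_variance_div_sq (memLp_frac (ν := ν) lam k) hc).trans ?_)
    · intro ω hω
      simp only [Set.mem_ofPred_eq] at hω ⊢
      exact hω.le
    refine ENNReal.ofReal_le_ofReal ?_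
    rw [div_le_iff₀ (by positivity)]
    refine (var_frac hν lam k).le.trans (le_of_eq ?_)
    rw [← Real.rpow_natCast, ← Real.rpow_neg (by norm_num), ← Real.rpow_natCast (_ ^ _),
      ← Real.rpow_mul (by norm_num), ← Real.rpow_add (by norm_num)]
    congr 1
    push_cast
    ring
  · have h : Tendsto (fun k : ℕ => ((2 : ℝ) ^ (-(1 : ℝ) / 3)) ^ k) atTop (nhds 0) := by
      refine tendsto_pow_atTop_nhds_zero_of_lt_one (by positivity) ?_
      exact Real.rpow_lt_one_of_one_lt_of_neg (by norm_num) (by norm_num)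
    refine h.congr fun k => ?_
    rw [← Real.rpow_natCast, ← Real.rpow_mul (by norm_num)]
    congr 1
    ring
end

section
/- Fix p ∈ (1/2, 1) and α ∈ (0,1). For every constant A > 0 there is a constant C > 0 such that for all λ ≥ 3 and all positive integers k with |k − (log_{1/√(pq)} λ − (ln(p/q) / (2 ln^{3/2}(1/√(pq)))) · Φ^{-1}(α) · √(ln λ))| ≤ A, one has |E X̄_k(λ) − α| ≤ C k^{−1/2}. -/
/-!
Poissonized model for partial fillup in tries (Janson–Szpankowski).

An outcome `ω : ℕ × (ℕ → ℕ → Bool)` consists of the number `ω.1 = N` of inserted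
strings and a source `ω.2` of infinitely many strings, where `ω.2 i j` is the `j`-th
bit of the `i`-th string; the inserted strings are the strings `0, …, N-1`.  Under the
Poissonized measure, `N ~ Po(λ)` is independent of the strings, and all bits are
i.i.d. with `P(bit = 1) = p`.
-/

open MeasureTheory ProbabilityTheory Real Filter

noncomputable def gPhi (x : ℝ) : ℝ := ProbabilityTheory.cdf (ProbabilityTheory.gaussianReal 0 1) x
noncomputable def gphi (x : ℝ) : ℝ := gaussianPDFReal 0 1 x

lemma gphi_eq (x : ℝ) : gphi x = (√(2 * π))⁻¹ * rexp (-(x ^ 2 / 2)) := by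
  simp [gphi, gaussianPDFReal, neg_div]

lemma gphi_cont : Continuous gphi := by
  have : gphi = fun x => (√(2 * π))⁻¹ * rexp (-(x ^ 2 / 2)) := funext gphi_eq
  rw [this]; fun_prop

lemma gPhi_eq (x : ℝ) : gPhi x = ∫ y in Set.Iic x, gphi y := by
  rw [gPhi, cdf_eq_real, measureReal_def, gaussianReal_apply_eq_integral _ one_ne_zero,
    ENNReal.toReal_ofReal]
  · rfl
  · exact integral_nonneg fun y => gaussianPDFReal_nonneg _ _ _

lemma gphi_integrable : Integrable gphi := integrable_gaussianPDFReal 0 1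

lemma gPhi_hasDerivAt (x : ℝ) : HasDerivAt gPhi (gphi x) x := by
  have h : gPhi = fun y => gPhi 0 + ∫ t in (0:ℝ)..y, gphi t := by
    funext y
    rw [← intervalIntegral.integral_Iic_sub_Iic gphi_integrable.integrableOn
      gphi_integrable.integrableOn, ← gPhi_eq, ← gPhi_eq]
    ring
  rw [h]
  refine HasDerivAt.const_add _ ?_
  exact intervalIntegral.integral_hasDerivAt_right (gphi_cont.intervalIntegrable _ _)
    (gphi_cont.stronglyMeasurableAtFilter _ _) gphi_cont.continuousAt

lemma gPhi_nonneg (x : ℝ) : 0 ≤ gPhi x := cdf_nonneg _ _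
lemma gPhi_le_one (x : ℝ) : gPhi x ≤ 1 := cdf_le_one _ _

lemma inv_sqrt_le : (√(2 * π))⁻¹ ≤ 1 := by
  apply inv_le_one_of_one_le₀
  rw [Real.one_le_sqrt]
  linarith [Real.pi_gt_three]

lemma gphi_le (x : ℝ) : gphi x ≤ rexp (-(x ^ 2 / 2)) := by
  rw [gphi_eq]
  calc _ ≤ 1 * rexp (-(x ^ 2 / 2)) := by gcongr; exact inv_sqrt_le
    _ = _ := one_mul _

lemma gphi_nonneg (x : ℝ) : 0 ≤ gphi x := gaussianPDFReal_nonneg _ _ _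

lemma gPhi_lip (x y : ℝ) : |gPhi x - gPhi y| ≤ |x - y| := by
  have := Convex.norm_image_sub_le_of_norm_hasDerivWithin_le (f := gPhi) (f' := gphi) (C := 1)
    (s := Set.univ) (x := y) (y := x) (fun z _ => (gPhi_hasDerivAt z).hasDerivWithinAt)
    (fun z _ => by
      rw [Real.norm_eq_abs, abs_of_nonneg (gphi_nonneg z)]
      refine (gphi_le z).trans ?_
      rw [Real.exp_le_one_iff]; nlinarith [sq_nonneg z]) convex_univ trivial trivial
  simpa using this

lemma gauss_cheb (c : ℝ) (hc : 0 < c) :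
    (gaussianReal 0 1).real {x | c ≤ |x|} ≤ 1 / c ^ 2 := by
  have hX : MemLp (fun x : ℝ => x) 2 (gaussianReal 0 1) := memLp_id_gaussianReal 2
  have := meas_ge_le_variance_div_sq hX hc
  rw [variance_fun_id_gaussianReal, integral_id_gaussianReal] at this
  simp only [sub_zero] at this
  rw [measureReal_def]
  refine ENNReal.toReal_le_of_le_ofReal (by positivity) ?_
  simpa using this

noncomputable def hstep (x : ℝ) : ℝ := if 0 ≤ x then 1 else 0

lemma hstep_sub (x : ℝ) : |hstep x - gPhi x| ≤ 2 / (1 + x ^ 2) := by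
  have h1 : |hstep x - gPhi x| ≤ 1 := by
    have := gPhi_nonneg x
    have := gPhi_le_one x
    rw [abs_le]; unfold hstep; split_ifs <;> constructor <;> linarith
  rcases eq_or_ne x 0 with rfl | hx
  · norm_num at *; linarith
  have h2 : |hstep x - gPhi x| ≤ 1 / x ^ 2 := by
    have hc := gauss_cheb |x| (abs_pos.2 hx)
    rw [sq_abs] at hc
    refine le_trans ?_ hc
    unfold hstep
    split_ifs with h0
    · rw [abs_of_nonneg (by linarith [gPhi_le_one x]), gPhi, cdf_eq_real,
        ← probReal_compl_eq_one_sub measurableSet_Iic]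
      refine measureReal_mono ?_
      · intro y hy
        simp only [Set.mem_compl_iff, Set.mem_Iic, not_le, Set.mem_ofPred_eq] at *
        rw [abs_of_nonneg h0]
        exact hy.le.trans (le_abs_self _)
    · rw [zero_sub, abs_neg, abs_of_nonneg (gPhi_nonneg x), gPhi, cdf_eq_real]
      refine measureReal_mono ?_
      · intro y hy
        simp only [Set.mem_Iic, not_le, Set.mem_ofPred_eq] at *
        rw [abs_of_neg h0, abs_of_neg (by linarith)]
        linarith
  have hx2 : 0 < x ^ 2 := by positivity
  rw [le_div_iff₀ (by positivity)]
  rw [le_div_iff₀ hx2] at h2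
  linarith

lemma sinh_sub_le (z : ℝ) : |z - Real.sinh z| ≤ |z| ^ 3 * rexp |z| := by
  have h (x : ℝ) : |rexp x - (1 + x + x ^ 2 / 2)| ≤ |x| ^ 3 * rexp |x| := by
    have := Complex.norm_exp_sub_sum_le_norm_mul_exp (x : ℂ) 3
    simp only [Finset.sum_range_succ, Finset.sum_range_zero, Nat.factorial] at this
    have e : Complex.exp (x : ℂ) - (0 + (x : ℂ) ^ 0 / ((1 : ℕ) : ℂ) + (x : ℂ) ^ 1 / ((0 + 1) * 1 : ℕ)
      + (x : ℂ) ^ 2 / ((1 + 1) * ((0 + 1) * 1) : ℕ)) = ((rexp x - (1 + x + x ^ 2 / 2) : ℝ) : ℂ) := by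
      push_cast; ring
    rw [e] at this
    simpa only [Complex.norm_real, Real.norm_eq_abs] using this
  have h1 := abs_le.1 (h z)
  have h2 := h (-z)
  rw [abs_neg] at h2
  have h2 := abs_le.1 h2
  rw [Real.sinh_eq, abs_le]
  constructor <;> linarith [h1.1, h1.2, h2.1, h2.2]

noncomputable def kerr (y d : ℝ) : ℝ :=
  (gPhi (y + d) + gPhi (y - d)) / 2 - gPhi (y / √(1 + d ^ 2))

noncomputable def kerr' (y d : ℝ) : ℝ :=
  (gphi (y + d) - gphi (y - d)) / 2 + gphi (y / √(1 + d ^ 2)) * (y * d / (√(1 + d ^ 2)) ^ 3)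

lemma kerr_hasDerivAt (y d : ℝ) : HasDerivAt (kerr y) (kerr' y d) d := by
  have h1 : HasDerivAt (fun d => gPhi (y + d)) (gphi (y + d)) d := by
    refine ((gPhi_hasDerivAt (y + d)).comp d ((hasDerivAt_id d).const_add y)).congr_deriv ?_
    ring
  have h2 : HasDerivAt (fun d => gPhi (y - d)) (-gphi (y - d)) d := by
    refine ((gPhi_hasDerivAt (y - d)).comp d ((hasDerivAt_id d).const_sub y)).congr_deriv ?_
    ring
  have hw : 0 < √(1 + d ^ 2) := by positivity
  have h3 : HasDerivAt (fun d => √(1 + d ^ 2)) (d / √(1 + d ^ 2)) d := by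
    have := (((hasDerivAt_id d).pow 2).const_add 1).sqrt
      (show (1 : ℝ) + id d ^ 2 ≠ 0 by simp only [id]; positivity)
    refine this.congr_deriv ?_
    simp; field_simp
  have h4 : HasDerivAt (fun d => y / √(1 + d ^ 2)) (-(y * d / (√(1 + d ^ 2)) ^ 3)) d := by
    have := (hasDerivAt_const d y).div h3 hw.ne'
    refine this.congr_deriv ?_
    field_simp; ring
  have h5 := (gPhi_hasDerivAt (y / √(1 + d ^ 2))).comp d h4
  have := ((h1.add h2).div_const 2).sub h5
  refine this.congr_deriv ?_
  unfold kerr'; ring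

lemma kerr'_eq (y d : ℝ) : kerr' y d = gphi y *
    ((y * d) * (rexp (y ^ 2 * d ^ 2 / (2 * (1 + d ^ 2))) - 1) * (1 / (√(1 + d ^ 2)) ^ 3)
      + (y * d) * (1 / (√(1 + d ^ 2)) ^ 3 - 1)
      + (y * d - Real.sinh (y * d)) * rexp (-(d ^ 2 / 2))
      + (y * d) * (1 - rexp (-(d ^ 2 / 2)))) := by
  have hw : √(1 + d ^ 2) ^ 2 = 1 + d ^ 2 := Real.sq_sqrt (by positivity)
  have e1 : gphi (y + d) = gphi y * (rexp (-(d ^ 2 / 2)) * rexp (-(y * d))) := by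
    rw [gphi_eq, gphi_eq, mul_assoc, ← Real.exp_add, ← Real.exp_add]; congr 2; ring
  have e2 : gphi (y - d) = gphi y * (rexp (-(d ^ 2 / 2)) * rexp (y * d)) := by
    rw [gphi_eq, gphi_eq, mul_assoc, ← Real.exp_add, ← Real.exp_add]; congr 2; ring
  have e3 : gphi (y / √(1 + d ^ 2)) = gphi y * rexp (y ^ 2 * d ^ 2 / (2 * (1 + d ^ 2))) := by
    rw [gphi_eq, gphi_eq, mul_assoc, ← Real.exp_add]; congr 2
    rw [div_pow, hw]; field_simp; ring
  rw [kerr', e1, e2, e3, Real.sinh_eq]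
  ring

lemma kerr'_le (y d : ℝ) (hd : 0 ≤ d) (hd1 : d ≤ 1) :
    |kerr' y d| ≤ 1152 * rexp 2 / (1 + y ^ 2) * d ^ 3 := by
  set z := y * d with hz
  have hzabs : |z| = |y| * d := by rw [hz, abs_mul, abs_of_nonneg hd]
  have hzy : |z| ≤ |y| := by rw [hzabs]; nlinarith [abs_nonneg y]
  set w := √(1 + d ^ 2) with hw
  have hw2 : w ^ 2 = 1 + d ^ 2 := Real.sq_sqrt (by positivity)
  have hw1 : 1 ≤ w := by rw [hw, Real.one_le_sqrt]; nlinarith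
  set a := y ^ 2 * d ^ 2 / (2 * (1 + d ^ 2)) with ha
  have ha0 : 0 ≤ a := by positivity
  have had : a ≤ |z| ^ 2 := by
    rw [ha, div_le_iff₀ (by positivity), hzabs, mul_pow, sq_abs]
    nlinarith [mul_nonneg (sq_nonneg y) (sq_nonneg d), mul_nonneg (mul_nonneg (sq_nonneg y) (sq_nonneg d)) (sq_nonneg d)]
  have hay : a ≤ y ^ 2 / 4 := by
    rw [ha, div_le_iff₀ (by positivity)]
    have : d ^ 2 ≤ 1 := by nlinarith
    nlinarith [mul_nonneg (sq_nonneg y) (sub_nonneg.2 this)]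
  set M := rexp (1 + y ^ 2 / 4) with hM
  have hM1 : 1 ≤ M := Real.one_le_exp (by positivity)
  have b1 : |rexp a - 1| ≤ |z| ^ 2 * M := by
    rw [abs_of_nonneg (by linarith [Real.one_le_exp ha0])]
    have h1 : rexp a - 1 ≤ a * rexp a := by
      have h := Real.add_one_le_exp (-a)
      have : rexp a * rexp (-a) = 1 := by rw [← Real.exp_add]; simp
      nlinarith [Real.exp_pos a]
    refine h1.trans ?_
    have : rexp a ≤ M := Real.exp_le_exp.2 (by linarith)
    gcongr
  have b2 : |1 / w ^ 3| ≤ 1 := by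
    rw [abs_of_nonneg (by positivity), div_le_one (by positivity)]
    exact one_le_pow₀ hw1
  have b3 : |1 / w ^ 3 - 1| ≤ 2 * d ^ 2 * M := by
    rw [abs_of_nonpos (by linarith [le_of_abs_le b2])]
    have : 1 - 2 * d ^ 2 ≤ 1 / w ^ 3 := by
      have h4 : 1 / w ^ 4 ≤ 1 / w ^ 3 := by
        apply one_div_le_one_div_of_le (by positivity)
        exact pow_le_pow_right₀ hw1 (by norm_num)
      refine le_trans ?_ h4
      rw [show w ^ 4 = (1 + d ^ 2) ^ 2 by rw [← hw2]; ring, le_div_iff₀ (by positivity)]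
      nlinarith [sq_nonneg d, mul_nonneg (sq_nonneg d) (sq_nonneg d), mul_nonneg (mul_nonneg (sq_nonneg d) (sq_nonneg d)) (sq_nonneg d)]
    nlinarith [sq_nonneg d]
  have b4 : |z - Real.sinh z| ≤ |z| ^ 3 * M := by
    refine (sinh_sub_le z).trans ?_
    have : rexp |z| ≤ M := Real.exp_le_exp.2 (by nlinarith [sq_abs y, sq_nonneg (|y| / 2 - 1)])
    gcongr
  have b5 : |rexp (-(d ^ 2 / 2))| ≤ 1 := by
    rw [abs_of_nonneg (Real.exp_pos _).le, Real.exp_le_one_iff]; nlinarith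
  have b6 : |1 - rexp (-(d ^ 2 / 2))| ≤ d ^ 2 * M := by
    rw [abs_of_nonneg (by linarith [le_of_abs_le b5])]
    have := Real.add_one_le_exp (-(d ^ 2 / 2))
    nlinarith [sq_nonneg d]
  have hbr : |z * (rexp a - 1) * (1 / w ^ 3) + z * (1 / w ^ 3 - 1)
      + (z - Real.sinh z) * rexp (-(d ^ 2 / 2)) + z * (1 - rexp (-(d ^ 2 / 2)))|
      ≤ d ^ 3 * (3 * (|y| * (1 + y ^ 2))) * M := by
    calc _ ≤ |z| * (|z| ^ 2 * M) * 1 + |z| * (2 * d ^ 2 * M) + (|z| ^ 3 * M) * 1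
            + |z| * (d ^ 2 * M) := by
          refine (abs_add_le _ _).trans (add_le_add ((abs_add_le _ _).trans (add_le_add
            ((abs_add_le _ _).trans (add_le_add ?_ ?_)) ?_)) ?_)
          · rw [abs_mul, abs_mul]; gcongr
          · rw [abs_mul]; gcongr
          · rw [abs_mul]; gcongr
          · rw [abs_mul]; gcongr
      _ = d ^ 3 * (2 * |y| * |y| ^ 2 + 3 * |y|) * M := by rw [hzabs]; ring
      _ ≤ _ := by
          rw [sq_abs]
          gcongr
          nlinarith [abs_nonneg y, mul_nonneg (abs_nonneg y) (sq_nonneg y)]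
  rw [kerr'_eq, abs_mul, abs_of_nonneg (gphi_nonneg y)]
  have hfin : rexp (-(y ^ 2 / 2)) * (3 * (|y| * (1 + y ^ 2)) * M) ≤ 1152 * rexp 2 / (1 + y ^ 2) := by
    rw [le_div_iff₀ (by positivity)]
    have hy1 : |y| ≤ 1 + y ^ 2 := by nlinarith [sq_abs y, sq_nonneg (|y| - 1), abs_nonneg y]
    have h3 := Real.pow_div_factorial_le_exp (1 + y ^ 2 / 4) (by positivity) 3
    have h3' : (1 + y ^ 2) ^ 3 ≤ 384 * M := by
      have : (1 + y ^ 2) ^ 3 ≤ (4 * (1 + y ^ 2 / 4)) ^ 3 := by gcongr; linarith [sq_nonneg y]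
      simp [Nat.factorial] at h3
      rw [mul_pow] at this
      linarith
    have hMM : rexp (-(y ^ 2 / 2)) * M * M = rexp 2 := by
      rw [hM, ← Real.exp_add, ← Real.exp_add]; congr 1; ring
    calc _ ≤ rexp (-(y ^ 2 / 2)) * (3 * ((1 + y ^ 2) * (1 + y ^ 2)) * M) * (1 + y ^ 2) := by gcongr
      _ = 3 * rexp (-(y ^ 2 / 2)) * M * (1 + y ^ 2) ^ 3 := by ring
      _ ≤ 3 * rexp (-(y ^ 2 / 2)) * M * (384 * M) := by gcongr
      _ = 1152 * (rexp (-(y ^ 2 / 2)) * M * M) := by ring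
      _ = _ := by rw [hMM]
  calc _ ≤ rexp (-(y ^ 2 / 2)) * (d ^ 3 * (3 * (|y| * (1 + y ^ 2))) * M) := by
        gcongr
        exact gphi_le y
    _ = rexp (-(y ^ 2 / 2)) * (3 * (|y| * (1 + y ^ 2)) * M) * d ^ 3 := by ring
    _ ≤ _ := by gcongr

lemma kerr_le (y d : ℝ) (hd : 0 ≤ d) (hd1 : d ≤ 1) :
    |kerr y d| ≤ 1152 * rexp 2 / (1 + y ^ 2) * d ^ 4 := by
  have := Convex.norm_image_sub_le_of_norm_hasDerivWithin_le (f := kerr y) (f' := kerr' y)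
    (C := 1152 * rexp 2 / (1 + y ^ 2) * d ^ 3)
    (s := Set.Icc 0 d) (x := 0) (y := d) (fun z _ => (kerr_hasDerivAt y z).hasDerivWithinAt)
    (fun z hz => by
      refine (kerr'_le y z hz.1 (hz.2.trans hd1)).trans ?_
      have := hz.1
      have := hz.2
      gcongr) (convex_Icc _ _) ⟨le_rfl, hd⟩ ⟨hd, le_rfl⟩
  have h0 : kerr y 0 = 0 := by simp [kerr]
  rw [h0, sub_zero, sub_zero, Real.norm_eq_abs, Real.norm_eq_abs, abs_of_nonneg hd] at this
  linarith

noncomputable def avg (f : ℝ → ℝ) : ℝ → ℝ := fun x => (f (x + 1) + f (x - 1)) / 2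

lemma avg_sub (f g : ℝ → ℝ) : avg (f - g) = avg f - avg g := by
  funext x; simp [avg]; ring

lemma avgN_sub (n : ℕ) (f g : ℝ → ℝ) : avg^[n] (f - g) = avg^[n] f - avg^[n] g := by
  induction n generalizing f g with
  | zero => rfl
  | succ n ih => rw [Function.iterate_succ_apply, avg_sub, ih]; rfl

lemma avgN_sup (n : ℕ) (f : ℝ → ℝ) (M : ℝ) (h : ∀ x, |f x| ≤ M) (x : ℝ) : |avg^[n] f x| ≤ M := by
  induction n generalizing f with
  | zero => exact h x
  | succ n ih =>
    rw [Function.iterate_succ_apply]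
    apply ih
    intro y
    have h1 := abs_le.1 (h (y + 1))
    have h2 := abs_le.1 (h (y - 1))
    rw [avg, abs_le]; constructor <;> linarith [h1.1, h1.2, h2.1, h2.2]

lemma avgN_eq (n : ℕ) (f : ℝ → ℝ) (x : ℝ) : avg^[n] f x =
    ∑ ij ∈ Finset.HasAntidiagonal.antidiagonal n, (n.choose ij.1 : ℝ) / 2 ^ n * f (x + ij.1 - ij.2) := by
  induction n generalizing x with
  | zero => simp
  | succ n ih =>
    rw [Function.iterate_succ_apply', avg, ih, ih]
    have := Finset.sum_antidiagonal_choose_succ_mul (R := ℝ)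
      (fun i j => f (x + i - j) / 2 ^ (n + 1)) n
    have e : ∑ ij ∈ Finset.HasAntidiagonal.antidiagonal (n + 1), ((n + 1).choose ij.1 : ℝ) / 2 ^ (n + 1) * f (x + ij.1 - ij.2)
      = ∑ ij ∈ Finset.HasAntidiagonal.antidiagonal (n + 1), ((n + 1).choose ij.1 : ℝ) * (f (x + ij.1 - ij.2) / 2 ^ (n + 1)) :=
      Finset.sum_congr rfl fun ij _ => by ring
    rw [e, this, add_div, Finset.sum_div, Finset.sum_div, add_comm]
    congr 1
    · refine Finset.sum_congr rfl fun ij _ => ?_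
      rw [show x - 1 + (ij.1 : ℝ) - ij.2 = x + ij.1 - ((ij.2 + 1 : ℕ) : ℝ) by push_cast; ring]
      field_simp
      ring
    · refine Finset.sum_congr rfl fun ij hij => ?_
      have : n.choose ij.1 = n.choose ij.2 :=
        Nat.choose_symm_of_eq_add (by rw [Finset.HasAntidiagonal.mem_antidiagonal] at hij; omega)
      rw [show x + 1 + (ij.1 : ℝ) - ij.2 = x + ((ij.1 + 1 : ℕ) : ℝ) - ij.2 by push_cast; ring, this]
      field_simp
      ring

lemma cb_bound (m : ℕ) : (m.centralBinom) ^ 2 * (2 * m + 1) ≤ 4 ^ (2 * m) := by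
  induction m with
  | zero => simp
  | succ m ih =>
    have h := Nat.succ_mul_centralBinom_succ m
    have h2 : (m + 1) ^ 2 * ((m + 1).centralBinom ^ 2 * (2 * (m + 1) + 1))
        = 4 * (2 * m + 1) * (2 * m + 3) * (m.centralBinom ^ 2 * (2 * m + 1)) := by
      calc _ = ((m + 1) * (m + 1).centralBinom) ^ 2 * (2 * m + 3) := by ring
        _ = _ := by rw [h]; ring
    have h3 : 4 * (2 * m + 1) * (2 * m + 3) * (m.centralBinom ^ 2 * (2 * m + 1))
        ≤ (16 * (m + 1) ^ 2) * 4 ^ (2 * m) := Nat.mul_le_mul (by nlinarith) ih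
    have h4 : (m + 1) ^ 2 * ((m + 1).centralBinom ^ 2 * (2 * (m + 1) + 1))
        ≤ (m + 1) ^ 2 * 4 ^ (2 * (m + 1)) := by
      rw [h2]; refine h3.trans (le_of_eq ?_); ring
    exact Nat.le_of_mul_le_mul_left h4 (by positivity)

lemma choose_bound_nat (n j : ℕ) : (n.choose j) ^ 2 * (n + 1) ≤ 4 * 4 ^ n := by
  rcases Nat.even_or_odd' n with ⟨m, rfl | rfl⟩
  · calc _ ≤ m.centralBinom ^ 2 * (2 * m + 1) := by
          gcongr; exact Nat.choose_le_centralBinom _ _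
      _ ≤ 4 ^ (2 * m) := cb_bound m
      _ ≤ _ := by omega
  · calc _ ≤ (m + 1).centralBinom ^ 2 * (2 * (m + 1) + 1) := by
          apply Nat.mul_le_mul _ (by omega)
          gcongr
          calc (2 * m + 1).choose j ≤ (2 * (m + 1)).choose (j + 1) := by
                rw [show 2 * (m + 1) = (2 * m + 1) + 1 by ring, Nat.choose_succ_succ]; omega
            _ ≤ _ := Nat.choose_le_centralBinom _ _
      _ ≤ 4 ^ (2 * (m + 1)) := cb_bound (m + 1)
      _ = _ := by ring

lemma choose_bound (n j : ℕ) : (n.choose j : ℝ) / 2 ^ n ≤ 2 / √(n + 1) := by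
  rw [div_le_div_iff₀ (by positivity) (by positivity)]
  have h : ((n.choose j : ℝ)) ^ 2 * (n + 1) ≤ 4 * 4 ^ n := by exact_mod_cast choose_bound_nat n j
  apply (sq_le_sq₀ (by positivity) (by positivity)).1
  rw [mul_pow, Real.sq_sqrt (by positivity), mul_pow, ← pow_mul, mul_comm n 2, pow_mul]
  norm_num
  exact h

lemma avgN_tel (n : ℕ) (h G : ℝ → ℝ) (B : ℝ) (hG : ∀ x, |G x| ≤ B)
    (hh : ∀ x, |h x| ≤ G (x + 1) - G (x - 1)) (x : ℝ) :
    |avg^[n] h x| ≤ 4 * B / √(n + 1) := by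
  rw [avgN_eq]
  calc _ ≤ ∑ ij ∈ Finset.HasAntidiagonal.antidiagonal n, |(n.choose ij.1 : ℝ) / 2 ^ n * h (x + ij.1 - ij.2)| :=
        Finset.abs_sum_le_sum_abs _ _
    _ ≤ ∑ ij ∈ Finset.HasAntidiagonal.antidiagonal n,
        2 / √(n + 1) * (G (x + ij.1 - ij.2 + 1) - G (x + ij.1 - ij.2 - 1)) := by
        refine Finset.sum_le_sum fun ij _ => ?_
        rw [abs_mul, abs_of_nonneg (a := (n.choose ij.1 : ℝ) / 2 ^ n) (by positivity)]
        have := choose_bound n ij.1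
        have := hh (x + ij.1 - ij.2)
        gcongr
    _ = 2 / √(n + 1) * ∑ ij ∈ Finset.HasAntidiagonal.antidiagonal n,
        (G (x + ij.1 - ij.2 + 1) - G (x + ij.1 - ij.2 - 1)) := by rw [Finset.mul_sum]
    _ = 2 / √(n + 1) * ∑ i ∈ Finset.range (n + 1),
        (G (x + 2 * ((i + 1 : ℕ) : ℝ) - n - 1) - G (x + 2 * (i : ℝ) - n - 1)) := by
        rw [Finset.Nat.sum_antidiagonal_eq_sum_range_succ_mk]
        congr 1
        refine Finset.sum_congr rfl fun i hi => ?_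
        have : i ≤ n := by rw [Finset.mem_range] at hi; omega
        push_cast [this]
        congr 2 <;> ring
    _ = 2 / √(n + 1) * (G (x + 2 * ((n + 1 : ℕ) : ℝ) - n - 1) - G (x + 2 * ((0 : ℕ) : ℝ) - n - 1)) := by
        rw [Finset.sum_range_sub (fun i : ℕ => G (x + 2 * (i : ℝ) - n - 1))]
    _ ≤ 2 / √(n + 1) * (2 * B) := by
        gcongr
        have h1 := abs_le.1 (hG (x + 2 * ((n + 1 : ℕ) : ℝ) - n - 1))
        have h2 := abs_le.1 (hG (x + 2 * ((0 : ℕ) : ℝ) - n - 1))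
        linarith [h1.1, h1.2, h2.1, h2.2]
    _ = _ := by ring

lemma arctan_diff (y d : ℝ) (hd : 0 ≤ d) (hd1 : d ≤ 1) :
    2 / 3 * d / (1 + y ^ 2) ≤ Real.arctan (y + d) - Real.arctan (y - d) := by
  have := Convex.mul_sub_le_image_sub_of_le_deriv (D := Set.Icc (y - d) (y + d)) (convex_Icc _ _)
    (f := Real.arctan) Real.continuous_arctan.continuousOn
    Real.differentiable_arctan.differentiableOn (C := 1 / 3 / (1 + y ^ 2)) (by
      intro v hv
      have hv := interior_subset hv
      rw [Real.deriv_arctan, div_le_div_iff₀ (by positivity) (by positivity)]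
      have h1 := hv.1
      have h2 := hv.2
      have : (v - y) ^ 2 ≤ 1 := by nlinarith
      nlinarith [sq_nonneg (v - 2 * y)]) (y - d) ⟨le_rfl, by linarith⟩ (y + d)
      ⟨by linarith, le_rfl⟩ (by linarith)
  refine le_trans (le_of_eq ?_) this
  ring

lemma avgN_L1 (n : ℕ) (h : ℝ → ℝ) (M s : ℝ) (hM : 0 ≤ M) (hs : 1 ≤ s)
    (hh : ∀ x, |h x| ≤ M / (1 + (x / s) ^ 2)) (x : ℝ) :
    |avg^[n] h x| ≤ 10 * M * s / √(n + 1) := by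
  have hs0 : 0 < s := by linarith
  have := avgN_tel n h (fun x => 3 / 2 * M * s * Real.arctan (x / s)) (3 / 2 * M * s * (π / 2))
    (fun x => by
      rw [abs_mul, abs_of_nonneg (by positivity)]
      gcongr
      rw [abs_le]
      exact ⟨(Real.neg_pi_div_two_lt_arctan _).le, (Real.arctan_lt_pi_div_two _).le⟩)
    (fun x => by
      refine (hh x).trans ?_
      have := arctan_diff (x / s) (1 / s) (by positivity) (by rw [div_le_one hs0]; exact hs)
      rw [← mul_sub, show (x + 1) / s = x / s + 1 / s by ring, show (x - 1) / s = x / s - 1 / s by ring]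
      calc _ = 3 / 2 * M * s * (2 / 3 * (1 / s) / (1 + (x / s) ^ 2)) := by field_simp
        _ ≤ _ := by gcongr) x
  refine this.trans ?_
  apply div_le_div_of_nonneg_right _ (Real.sqrt_nonneg _)
  nlinarith [Real.pi_lt_d2, Real.pi_pos, mul_nonneg hM hs0.le]

noncomputable def fgau (t : ℕ) : ℝ → ℝ := fun x => gPhi (x / √t)

lemma avg_fgau (t : ℕ) (ht : 1 ≤ t) (x : ℝ) :
    avg (fgau t) x - fgau (t + 1) x = kerr (x / √t) (1 / √t) := by
  have ht0 : (0 : ℝ) < t := by exact_mod_cast ht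
  have hs : 0 < √(t : ℝ) := by positivity
  have h : √((t : ℝ) + 1) = √t * √(1 + (1 / √t) ^ 2) := by
    rw [← Real.sqrt_mul ht0.le]
    congr 1
    rw [div_pow, Real.sq_sqrt ht0.le]; field_simp
  simp only [avg, fgau, kerr]
  push_cast
  rw [h, add_div x, sub_div, div_div]

lemma summable_aux : Summable fun i : ℕ => √((i : ℝ) + 1) / ((i : ℝ) + 1) ^ 2 := by
  have h := (summable_nat_add_iff 1).2 (Real.summable_one_div_nat_rpow (p := 3 / 2)|>.2 (by norm_num))
  refine h.congr fun i => ?_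
  push_cast
  have : (0 : ℝ) < (i : ℝ) + 1 := by positivity
  rw [Real.sqrt_eq_rpow, ← Real.rpow_natCast, ← Real.rpow_sub this, one_div, ← Real.rpow_neg this.le]
  norm_num

lemma err_term (n i : ℕ) (hi : i < n) (x : ℝ) :
    |avg^[n - 1 - i] (avg (fgau (i + 1)) - fgau (i + 1 + 1)) x|
      ≤ 20 * (1152 * rexp 2) / √((n : ℝ) + 1) * (√((i : ℝ) + 1) / ((i : ℝ) + 1) ^ 2) := by
  set C1 := 1152 * rexp 2 with hC1
  have hC0 : 0 < C1 := by positivity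
  set t : ℝ := (i : ℝ) + 1 with ht
  have ht1 : 1 ≤ t := by rw [ht]; linarith [(Nat.cast_nonneg i : (0 : ℝ) ≤ i)]
  have ht0 : 0 < t := by linarith
  have hs : 1 ≤ √t := by rwa [Real.one_le_sqrt]
  have hs0 : 0 < √t := by positivity
  have hss : √t ^ 2 = t := Real.sq_sqrt ht0.le
  have hb (x : ℝ) : |(avg (fgau (i + 1)) - fgau (i + 1 + 1)) x| ≤ (C1 / t ^ 2) / (1 + (x / √t) ^ 2) := by
    rw [Pi.sub_apply, avg_fgau _ (by omega)]
    push_cast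
    rw [← ht]
    refine (kerr_le _ _ (by positivity) (by rw [div_le_one hs0]; exact hs)).trans (le_of_eq ?_)
    rw [div_pow _ _ 4, show √t ^ 4 = (√t ^ 2) ^ 2 by ring, hss, ← hC1]
    field_simp
    try ring
  have key (u : ℝ) (hu : 0 < u) (hnu : (n : ℝ) + 1 ≤ 4 * u) : 1 / √u ≤ 2 / √((n : ℝ) + 1) := by
    rw [div_le_div_iff₀ (by positivity) (by positivity), one_mul]
    rw [Real.sqrt_le_left (by positivity), mul_pow, Real.sq_sqrt hu.le]
    linarith
  by_cases hc : n + 1 ≤ 2 * (i + 1)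
  · have hc' : (n : ℝ) + 1 ≤ 2 * t := by rw [ht]; exact_mod_cast hc
    have h1 := avgN_sup (n - 1 - i) (avg (fgau (i + 1)) - fgau (i + 1 + 1)) (C1 / t ^ 2)
      (fun x => (hb x).trans (div_le_self (by positivity) (by nlinarith [sq_nonneg (x / √t)]))) x
    refine h1.trans ?_
    have k := key t ht0 (by linarith)
    calc C1 / t ^ 2 = C1 * (√t / t ^ 2) * (1 / √t) := by field_simp
      _ ≤ C1 * (√t / t ^ 2) * (2 / √((n : ℝ) + 1)) := by gcongr
      _ = 2 * C1 / √((n : ℝ) + 1) * (√t / t ^ 2) := by ring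
      _ ≤ _ := by gcongr; norm_num
  · have h1 := avgN_L1 (n - 1 - i) (avg (fgau (i + 1)) - fgau (i + 1 + 1)) (C1 / t ^ 2) (√t)
      (by positivity) hs hb x
    refine h1.trans ?_
    have e : ((n - 1 - i : ℕ) : ℝ) + 1 = n + 1 - t := by
      rw [ht, Nat.cast_sub (by omega), Nat.cast_sub (by omega)]; push_cast; ring
    have hc' : 2 * t < (n : ℝ) + 1 := by rw [ht]; push Not at hc; exact_mod_cast hc
    rw [e]
    have k := key (n + 1 - t) (by linarith) (by linarith)
    calc _ = 10 * C1 * (√t / t ^ 2) * (1 / √((n : ℝ) + 1 - t)) := by ring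
      _ ≤ 10 * C1 * (√t / t ^ 2) * (2 / √((n : ℝ) + 1)) := by gcongr
      _ = _ := by ring

lemma avgN_decomp (n : ℕ) (x : ℝ) : avg^[n] hstep x - fgau (n + 1) x =
    avg^[n] (hstep - fgau 1) x +
      ∑ i ∈ Finset.range n, avg^[n - 1 - i] (avg (fgau (i + 1)) - fgau (i + 1 + 1)) x := by
  have : ∑ i ∈ Finset.range n, avg^[n - 1 - i] (avg (fgau (i + 1)) - fgau (i + 1 + 1)) x
      = ∑ i ∈ Finset.range n, (avg^[n - i] (fgau (i + 1)) x - avg^[n - (i + 1)] (fgau (i + 1 + 1)) x) := by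
    refine Finset.sum_congr rfl fun i hi => ?_
    have hi := Finset.mem_range.1 hi
    rw [avgN_sub, Pi.sub_apply, ← Function.iterate_succ_apply,
      show (n - 1 - i).succ = n - i by omega, show n - 1 - i = n - (i + 1) by omega]
  rw [this, Finset.sum_range_sub' (fun i => avg^[n - i] (fgau (i + 1)) x), avgN_sub]
  simp

lemma berry_esseen : ∃ B > 0, ∀ (n : ℕ) (x : ℝ),
    |avg^[n] hstep x - gPhi (x / √((n : ℝ) + 1))| ≤ B / √((n : ℝ) + 1) := by
  set S := ∑' i : ℕ, √((i : ℝ) + 1) / ((i : ℝ) + 1) ^ 2 with hS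
  have hS0 : 0 ≤ S := tsum_nonneg fun i => by positivity
  refine ⟨20 + 20 * (1152 * rexp 2) * S, by positivity, fun n x => ?_⟩
  have h := avgN_decomp n x
  have e : fgau (n + 1) x = gPhi (x / √((n : ℝ) + 1)) := by simp [fgau]
  rw [← e, h]
  have h1 : |avg^[n] (hstep - fgau 1) x| ≤ 20 / √((n : ℝ) + 1) := by
    have := avgN_L1 n (hstep - fgau 1) 2 1 (by norm_num) le_rfl
      (fun x => by simpa [fgau] using hstep_sub x) x
    refine this.trans (le_of_eq (by norm_num))
  have h2 : |∑ i ∈ Finset.range n, avg^[n - 1 - i] (avg (fgau (i + 1)) - fgau (i + 1 + 1)) x|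
      ≤ 20 * (1152 * rexp 2) / √((n : ℝ) + 1) * S := by
    refine (Finset.abs_sum_le_sum_abs _ _).trans ?_
    refine (Finset.sum_le_sum fun i hi => err_term n i (Finset.mem_range.1 hi) x).trans ?_
    rw [← Finset.mul_sum]
    gcongr
    exact summable_aux.sum_le_tsum _ fun i _ => by positivity
  refine (abs_add_le _ _).trans ((add_le_add h1 h2).trans (le_of_eq (by ring)))

/-- signed sum of a word -/
noncomputable def wsum {k : ℕ} (r : Fin k → Bool) : ℝ := ∑ j, if r j then (1 : ℝ) else -1

lemma avgN_words (k : ℕ) (f : ℝ → ℝ) (x : ℝ) :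
    ∑ r : Fin k → Bool, f (x + wsum r) = 2 ^ k * avg^[k] f x := by
  induction k generalizing x with
  | zero => simp [wsum]
  | succ k ih =>
    rw [← (Fin.consEquiv fun _ : Fin (k + 1) => Bool).sum_comp, Fintype.sum_prod_type]
    have (b : Bool) (r : Fin k → Bool) :
      wsum ((Fin.consEquiv fun _ : Fin (k + 1) => Bool) (b, r)) = (if b then 1 else -1) + wsum r := by
      simp [wsum, Fin.consEquiv, Fin.sum_univ_succ]
    simp only [this, Fintype.sum_bool, ← add_assoc, ih]
    rw [Function.iterate_succ_apply', avg]
    simp only [if_true, Bool.false_eq_true, if_false]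
    rw [← sub_eq_add_neg]; ring

noncomputable def wprob (p : ℝ) {k : ℕ} (r : Fin k → Bool) : ℝ := ∏ j, if r j then p else 1 - p

def evSet {k : ℕ} (r : Fin k → Bool) (S T : Finset ℕ) : Set (ℕ → ℕ → Bool) :=
  {ω | (∀ i ∈ S, ∀ j : Fin k, ω i j = r j) ∧ ∀ i ∈ T, ¬ ∀ j : Fin k, ω i j = r j}

lemma meas_match {k : ℕ} (r : Fin k → Bool) (i : ℕ) :
    MeasurableSet {ω : ℕ → ℕ → Bool | ∀ j : Fin k, ω i j = r j} := by
  have : {ω : ℕ → ℕ → Bool | ∀ j : Fin k, ω i j = r j}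
      = ⋂ j : Fin k, {ω : ℕ → ℕ → Bool | ω i j = r j} := by ext; simp
  rw [this]
  refine MeasurableSet.iInter fun j => ?_
  have hm : Measurable fun ω : ℕ → ℕ → Bool => ω i j := by fun_prop
  exact hm (measurableSet_singleton (r j))

lemma meas_evSet {k : ℕ} (r : Fin k → Bool) (S T : Finset ℕ) : MeasurableSet (evSet r S T) := by
  have : evSet r S T = (⋂ i ∈ S, {ω : ℕ → ℕ → Bool | ∀ j : Fin k, ω i j = r j}) ∩
      ⋂ i ∈ T, {ω : ℕ → ℕ → Bool | ∀ j : Fin k, ω i j = r j}ᶜ := by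
    ext; simp [evSet]
  rw [this]
  exact (Finset.measurableSet_biInter _ fun i _ => meas_match r i).inter
    (Finset.measurableSet_biInter _ fun i _ => (meas_match r i).compl)

lemma evSet_base (p : ℝ) (hp0 : 0 ≤ p) (hp1 : p ≤ 1) (ν : Measure (ℕ → ℕ → Bool)) (hν : IIDBits p ν)
    {k : ℕ} (r : Fin k → Bool) (S : Finset ℕ) :
    ν.real (evSet r S ∅) = wprob p r ^ S.card := by
  let b : ℕ × ℕ → Bool := fun s => if h : s.2 < k then r ⟨s.2, h⟩ else false
  have h := hν.2 (S ×ˢ Finset.range k) b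
  have e : {ω : ℕ → ℕ → Bool | ∀ s ∈ S ×ˢ Finset.range k, ω s.1 s.2 = b s} = evSet r S ∅ := by
    ext ω
    simp only [evSet, Set.mem_ofPred_eq, Finset.mem_product, Finset.mem_range, Prod.forall,
      Finset.notMem_empty, false_imp_iff, implies_true, and_true, b]
    constructor
    · intro H i hi j
      simpa using H i j ⟨hi, j.2⟩
    · rintro H i j ⟨hi, hj⟩
      simpa [hj] using H i hi ⟨j, hj⟩
  rw [e, Finset.prod_product] at h
  have hin : ∀ i ∈ S, (∏ j ∈ Finset.range k, ENNReal.ofReal (if b (i, j) then p else 1 - p))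
      = ENNReal.ofReal (wprob p r) := by
    intro i _
    rw [wprob, ENNReal.ofReal_prod_of_nonneg (fun j _ => by split_ifs <;> linarith),
      Finset.prod_range]
    refine Finset.prod_congr rfl fun j _ => ?_
    simp [b]
  rw [Finset.prod_congr rfl hin, Finset.prod_const] at h
  rw [measureReal_def, h, ENNReal.toReal_pow, ENNReal.toReal_ofReal]
  exact Finset.prod_nonneg fun j _ => by split_ifs <;> linarith

lemma evSet_prob (p : ℝ) (hp0 : 0 ≤ p) (hp1 : p ≤ 1) (ν : Measure (ℕ → ℕ → Bool)) (hν : IIDBits p ν)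
    {k : ℕ} (r : Fin k → Bool) (S T : Finset ℕ) (hST : Disjoint S T) :
    ν.real (evSet r S T) = wprob p r ^ S.card * (1 - wprob p r) ^ T.card := by
  have := hν.1
  induction T using Finset.induction_on generalizing S with
  | empty => rw [evSet_base p hp0 hp1 ν hν]; simp
  | insert a T ha ih =>
    rw [Finset.disjoint_insert_right] at hST
    have e : evSet r S (insert a T) = evSet r S T \ evSet r (insert a S) T := by
      ext ω
      simp only [evSet, Set.mem_ofPred_eq, Finset.mem_insert, forall_eq_or_imp, Set.mem_sdiff]
      tauto
    rw [e, measureReal_sdiff _ (meas_evSet _ _ _), ih S hST.2, ih (insert a S),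
      Finset.card_insert_of_notMem hST.1, Finset.card_insert_of_notMem ha]
    · ring
    · rw [Finset.disjoint_insert_left]; exact ⟨ha, hST.2⟩
    · intro ω
      simp only [evSet, Set.mem_ofPred_eq, Finset.mem_insert, forall_eq_or_imp]
      tauto

lemma meas_pref {k : ℕ} (r : Fin k → Bool) (n : ℕ) :
    MeasurableSet {ω : ℕ → ℕ → Bool | 2 ≤ prefCount ω n k r} := by
  have : Measurable fun ω : ℕ → ℕ → Bool => prefCount ω n k r := by
    have e : (fun ω : ℕ → ℕ → Bool => prefCount ω n k r) = fun ω =>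
        ∑ i ∈ Finset.range n, Set.indicator {ω : ℕ → ℕ → Bool | ∀ j : Fin k, ω i j = r j} (fun _ => 1) ω := by
      funext ω
      rw [prefCount, Finset.card_filter]
      exact Finset.sum_congr rfl fun i _ => by simp only [Set.indicator_apply, Set.mem_ofPred_eq]
    rw [e]
    exact Finset.measurable_sum _ fun i _ => measurable_const.indicator (meas_match r i)
  exact this measurableSet_Ici

lemma pref_prob (p : ℝ) (hp0 : 0 ≤ p) (hp1 : p ≤ 1) (ν : Measure (ℕ → ℕ → Bool)) (hν : IIDBits p ν)
    {k : ℕ} (r : Fin k → Bool) (n : ℕ) :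
    ν.real {ω | 2 ≤ prefCount ω n k r} =
      1 - (1 - wprob p r) ^ n - n * wprob p r * (1 - wprob p r) ^ (n - 1) := by
  have := hν.1
  have hc := probReal_compl_eq_one_sub (μ := ν) (meas_pref r n)
  have e : {ω : ℕ → ℕ → Bool | 2 ≤ prefCount ω n k r}ᶜ = evSet r ∅ (Finset.range n) ∪
      ⋃ i ∈ Finset.range n, evSet r {i} ((Finset.range n).erase i) := by
    ext ω
    simp only [Set.mem_compl_iff, Set.mem_ofPred_eq, not_le, Set.mem_union, Set.mem_iUnion]
    have : prefCount ω n k r < 2 ↔ prefCount ω n k r = 0 ∨ prefCount ω n k r = 1 := by omega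
    rw [this]
    refine or_congr ?_ ?_
    · simp [prefCount, evSet, Finset.filter_eq_empty_iff]
    · rw [prefCount, Finset.card_eq_one]
      constructor
      · rintro ⟨i, hi⟩
        have hi' : i ∈ (Finset.range n).filter fun i => ∀ j : Fin k, ω i j = r j := by simp [hi]
        rw [Finset.mem_filter] at hi'
        refine ⟨i, hi'.1, ?_, ?_⟩
        · intro a ha; rw [Finset.mem_singleton] at ha; subst ha; exact hi'.2
        · intro a ha hh
          rw [Finset.mem_erase] at ha
          have : a ∈ (Finset.range n).filter fun i => ∀ j : Fin k, ω i j = r j :=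
            Finset.mem_filter.2 ⟨ha.2, hh⟩
          rw [hi, Finset.mem_singleton] at this
          exact ha.1 this
      · rintro ⟨i, hi, h1, h2⟩
        refine ⟨i, ?_⟩
        ext a
        rw [Finset.mem_filter, Finset.mem_singleton]
        constructor
        · rintro ⟨ha, hh⟩
          by_contra hne
          exact h2 a (Finset.mem_erase.2 ⟨hne, ha⟩) hh
        · rintro rfl
          exact ⟨hi, h1 a (Finset.mem_singleton_self a)⟩
  rw [e, measureReal_union ?_ ?_ (measure_ne_top _ _) (measure_ne_top _ _), measureReal_biUnion_finset, evSet_prob p hp0 hp1 ν hν _ _ _ (by simp)] at hc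
  · have h2 : ∀ i ∈ Finset.range n, ν.real (evSet r {i} ((Finset.range n).erase i))
        = wprob p r * (1 - wprob p r) ^ (n - 1) := by
      intro i hi
      rw [evSet_prob p hp0 hp1 ν hν _ _ _ (by simp), Finset.card_erase_of_mem hi]
      simp
    rw [Finset.sum_congr rfl h2] at hc
    simp at hc
    linarith
  · intro i hi j hj hij
    refine Set.disjoint_left.2 fun ω h1 h2 => ?_
    exact h1.2 j (Finset.mem_erase.2 ⟨hij.symm, hj⟩) (h2.1 j (Finset.mem_singleton_self j))
  · exact fun i _ => meas_evSet _ _ _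
  · refine Set.disjoint_left.2 fun ω h1 h2 => ?_
    simp only [Set.mem_iUnion] at h2
    obtain ⟨i, hi, h2⟩ := h2
    exact h1.2 i hi (h2.1 i (Finset.mem_singleton_self i))
  · exact Finset.measurableSet_biUnion _ fun i _ => meas_evSet _ _ _

lemma meas_po {k : ℕ} (r : Fin k → Bool) :
    MeasurableSet {ω : ℕ × (ℕ → ℕ → Bool) | 2 ≤ prefCount ω.2 ω.1 k r} := by
  have : {ω : ℕ × (ℕ → ℕ → Bool) | 2 ≤ prefCount ω.2 ω.1 k r}
      = ⋃ n : ℕ, {n} ×ˢ {ω : ℕ → ℕ → Bool | 2 ≤ prefCount ω n k r} := by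
    ext ⟨n, ω⟩
    simp
  rw [this]
  exact MeasurableSet.iUnion fun n => (measurableSet_singleton n).prod (meas_pref r n)

lemma poisson_sum (l : NNReal) (P : ℝ) :
    HasSum (fun n : ℕ => (rexp (-l) * (l : ℝ) ^ n / n.factorial) •
      (1 - (1 - P) ^ n - n * P * (1 - P) ^ (n - 1)))
      (1 - (1 + l * P) * rexp (-(l * P))) := by
  have hexp (x : ℝ) : HasSum (fun n : ℕ => x ^ n / n.factorial) (rexp x) := by
    have := NormedSpace.expSeries_div_hasSum_exp x
    rwa [← Real.exp_eq_exp_ℝ] at this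
  have h1 := (hexp l).mul_left (rexp (-l))
  have h2 := (hexp (l * (1 - P))).mul_left (rexp (-l))
  have h3 : HasSum (fun n : ℕ => rexp (-l) * (l : ℝ) ^ n / n.factorial * (n * P * (1 - P) ^ (n - 1)))
      (rexp (-l) * (l * P) * rexp (l * (1 - P))) := by
    rw [← hasSum_nat_add_iff' 1]
    simp only [Finset.range_one, Finset.sum_singleton, Nat.cast_zero, zero_mul, mul_zero, sub_zero]
    convert! (hexp (l * (1 - P))).mul_left (rexp (-l) * (l * P)) using 1
    funext n
    rw [Nat.factorial_succ]
    rw [mul_pow]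
    simp only [Nat.add_sub_cancel]
    push_cast
    field_simp
    ring
  have h := (h1.sub h2).sub h3
  convert! h using 1
  · funext n
    rw [smul_eq_mul, mul_pow]; ring
  · rw [← Real.exp_add, ← Real.exp_add, mul_assoc, mul_comm (l * P : ℝ), ← mul_assoc, ← Real.exp_add]
    rw [show -(l : ℝ) + l = 0 by ring, show -(l : ℝ) + l * (1 - P) = -(l * P) by ring, Real.exp_zero]
    ring

lemma poModel_pref (p : ℝ) (hp0 : 0 ≤ p) (hp1 : p ≤ 1) (ν : Measure (ℕ → ℕ → Bool)) (hν : IIDBits p ν)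
    {k : ℕ} (r : Fin k → Bool) (l : NNReal) :
    (poModel l ν).real {ω | 2 ≤ prefCount ω.2 ω.1 k r} =
      1 - (1 + l * wprob p r) * rexp (-(l * wprob p r)) := by
  have := hν.1
  have hm := meas_po r
  have h1 : (poModel l ν).real {ω | 2 ≤ prefCount ω.2 ω.1 k r}
      = ∫ n, ν.real {ω | 2 ≤ prefCount ω n k r} ∂poissonMeasure l := by
    rw [poModel, measureReal_def, Measure.prod_apply hm, integral_eq_lintegral_of_nonneg_ae
      (ae_of_all _ fun _ => measureReal_nonneg) (Measurable.of_discrete.aestronglyMeasurable)]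
    congr 1
    refine lintegral_congr fun n => ?_
    rw [ofReal_measureReal]
    rfl
  rw [h1, integral_poissonMeasure]
  simp only [pref_prob p hp0 hp1 ν hν]
  exact (poisson_sum l (wprob p r)).tsum_eq

lemma expect_eq (p : ℝ) (hp0 : 0 ≤ p) (hp1 : p ≤ 1) (ν : Measure (ℕ → ℕ → Bool)) (hν : IIDBits p ν)
    (k : ℕ) (l : NNReal) :
    ∫ ω, fracFilledPo k ω ∂poModel l ν =
      (∑ r : Fin k → Bool, (1 - (1 + l * wprob p r) * rexp (-(l * wprob p r)))) / 2 ^ k := by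
  have := hν.1
  have hfin : IsFiniteMeasure (poModel l ν) := by unfold poModel; infer_instance
  have e : (fun ω => fracFilledPo k ω) = fun ω => (∑ r : Fin k → Bool,
      Set.indicator {ω : ℕ × (ℕ → ℕ → Bool) | 2 ≤ prefCount ω.2 ω.1 k r} (fun _ => (1 : ℝ)) ω) / 2 ^ k := by
    funext ω
    rw [fracFilledPo, fillCountPo, fillCount, Finset.card_filter]
    push_cast
    congr 1
    exact Finset.sum_congr rfl fun r _ => by simp only [Set.indicator_apply, Set.mem_ofPred_eq]
  rw [e, integral_div, integral_finsetSum]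
  · congr 1
    refine Finset.sum_congr rfl fun r _ => ?_
    rw [integral_indicator_const _ (meas_po r), poModel_pref p hp0 hp1 ν hν]
    simp
  · intro r _
    exact (integrable_const _).indicator (meas_po r)

lemma wprob_eq (p q : ℝ) (hp : 0 < p) (hq0 : 0 < q) (hq : q = 1 - p) {k : ℕ} (r : Fin k → Bool) :
    wprob p r = rexp (Real.log (p / q) / 2 * wsum r - k * Real.log (1 / √(p * q))) := by
  have h1 : Real.log (1 / √(p * q)) = -(Real.log p + Real.log q) / 2 := by
    rw [one_div, Real.log_inv, Real.log_sqrt (by positivity), Real.log_mul hp.ne' hq0.ne']; ring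
  have h2 : Real.log (p / q) = Real.log p - Real.log q := Real.log_div hp.ne' hq0.ne'
  have h3 : Real.log (p / q) / 2 * wsum r - k * Real.log (1 / √(p * q))
      = ∑ j : Fin k, if r j then Real.log p else Real.log q := by
    have : (k : ℝ) * Real.log (1 / √(p * q)) = ∑ j : Fin k, Real.log (1 / √(p * q)) := by simp
    rw [this, wsum, Finset.mul_sum, ← Finset.sum_sub_distrib]
    refine Finset.sum_congr rfl fun j _ => ?_
    rw [h1, h2]; split_ifs <;> ring
  rw [h3, Real.exp_sum, wprob]
  refine Finset.prod_congr rfl fun j _ => ?_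
  split_ifs
  · rw [Real.exp_log hp]
  · rw [← hq, Real.exp_log hq0]

lemma int_ye : IntegrableOn (fun y : ℝ => y * rexp (-y)) (Set.Ioi 0) := by
  have := Real.GammaIntegral_convergent (s := 2) (by norm_num)
  refine this.congr_fun (fun y hy => ?_) measurableSet_Ioi
  norm_num; ring

lemma int_ye_val : ∫ y in Set.Ioi (0 : ℝ), y * rexp (-y) = 1 := by
  have := Real.Gamma_eq_integral (s := 2) (by norm_num)
  rw [Real.Gamma_two] at this
  rw [this]
  refine setIntegral_congr_fun measurableSet_Ioi fun y hy => ?_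
  norm_num; ring

lemma int_y2e : IntegrableOn (fun y : ℝ => (y ^ 2 + 1) * rexp (-y)) (Set.Ioi 0) := by
  have h3 := Real.GammaIntegral_convergent (s := 3) (by norm_num)
  have h1 := Real.GammaIntegral_convergent (s := 1) (by norm_num)
  refine (h3.add h1).congr_fun (fun y hy => ?_) measurableSet_Ioi
  simp only [Pi.add_apply]
  norm_num; ring

lemma int_ind (t : ℝ) : IntegrableOn (fun y : ℝ => y * rexp (-y) * hstep (t - y)) (Set.Ioi 0) := by
  have : (fun y : ℝ => y * rexp (-y) * hstep (t - y)) =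
      Set.indicator (Set.Iic t) (fun y => y * rexp (-y)) := by
    funext y
    simp only [Set.indicator_apply, hstep, sub_nonneg, Set.mem_Iic]
    split_ifs <;> simp
  rw [this]
  exact int_ye.indicator measurableSet_Iic

lemma gfun_eq (t : ℝ) (ht : 0 ≤ t) :
    1 - (1 + t) * rexp (-t) = ∫ y in Set.Ioi (0 : ℝ), y * rexp (-y) * hstep (t - y) := by
  have : (fun y : ℝ => y * rexp (-y) * hstep (t - y)) =
      Set.indicator (Set.Iic t) (fun y => y * rexp (-y)) := by
    funext y
    simp only [Set.indicator_apply, hstep, sub_nonneg, Set.mem_Iic]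
    split_ifs <;> simp
  rw [this, setIntegral_indicator measurableSet_Iic, Set.Ioi_inter_Iic,
    ← intervalIntegral.integral_of_le ht]
  have hd (y : ℝ) : HasDerivAt (fun y => -((1 + y) * rexp (-y))) (y * rexp (-y)) y := by
    have h1 : HasDerivAt (fun y : ℝ => rexp (-y)) (-rexp (-y)) y := by
      simpa using (hasDerivAt_neg y).exp
    have := (((hasDerivAt_id y).const_add 1).mul h1).neg
    refine this.congr_deriv ?_
    simp only [id]; ring
  rw [intervalIntegral.integral_eq_sub_of_hasDerivAt (fun y _ => hd y)
    ((by fun_prop : Continuous fun y : ℝ => y * rexp (-y)).intervalIntegrable _ _)]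
  simp; ring

lemma abs_log_le (y : ℝ) (hy : 0 < y) : y * |Real.log y| ≤ y ^ 2 + 1 := by
  have h1 := Real.log_le_sub_one_of_pos hy
  have h2 := Real.log_le_sub_one_of_pos (inv_pos.2 hy)
  rw [Real.log_inv] at h2
  have : |Real.log y| ≤ y + y⁻¹ := by
    have := inv_pos.2 hy
    rw [abs_le]; constructor <;> linarith
  calc y * |Real.log y| ≤ y * (y + y⁻¹) := by gcongr
    _ = _ := by field_simp

/-- Exact formula as a Gamma mixture of binomial tail probabilities. -/
lemma mixture (w c : ℝ) (hc : 0 < c) (k : ℕ) :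
    (∑ r : Fin k → Bool, (1 - (1 + rexp (w + c * wsum r)) * rexp (-rexp (w + c * wsum r)))) / 2 ^ k
      = ∫ y in Set.Ioi (0 : ℝ), y * rexp (-y) * avg^[k] hstep ((w - Real.log y) / c) ∧
    IntegrableOn (fun y : ℝ => y * rexp (-y) * avg^[k] hstep ((w - Real.log y) / c)) (Set.Ioi 0) := by
  have hpt : ∀ y ∈ Set.Ioi (0 : ℝ), (∑ r : Fin k → Bool, y * rexp (-y) * hstep (rexp (w + c * wsum r) - y)) / 2 ^ k
      = y * rexp (-y) * avg^[k] hstep ((w - Real.log y) / c) := by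
    intro y hy
    have hy : 0 < y := hy
    have h1 (r : Fin k → Bool) : hstep (rexp (w + c * wsum r) - y) = hstep ((w - Real.log y) / c + wsum r) := by
      unfold hstep
      congr 1
      rw [sub_nonneg, ← Real.log_le_iff_le_exp hy, eq_iff_iff]
      have : (w - Real.log y) / c + wsum r = (w + c * wsum r - Real.log y) / c := by field_simp; ring
      rw [this, le_div_iff₀ hc, zero_mul, sub_nonneg]
    simp only [h1]
    rw [← Finset.mul_sum, avgN_words]
    field_simp
  have hint : IntegrableOn (fun y => (∑ r : Fin k → Bool, y * rexp (-y) * hstep (rexp (w + c * wsum r) - y)) / 2 ^ k)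
      (Set.Ioi (0 : ℝ)) :=
    (integrable_finsetSum _ fun r _ => int_ind _).div_const _
  refine ⟨?_, hint.congr_fun hpt measurableSet_Ioi⟩
  rw [← setIntegral_congr_fun measurableSet_Ioi hpt, integral_div, integral_finsetSum _ fun r _ => int_ind _]
  congr 1
  exact Finset.sum_congr rfl fun r _ => gfun_eq _ (Real.exp_pos _).le

lemma mixture_bound (c x D : ℝ) (hc : 0 < c) (hD : 0 ≤ D) : ∃ C > 0, ∀ (k : ℕ) (w : ℝ),
    |w / c - x * √((k : ℝ) + 1)| ≤ D →
    |(∑ r : Fin k → Bool, (1 - (1 + rexp (w + c * wsum r)) * rexp (-rexp (w + c * wsum r)))) / 2 ^ k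
      - gPhi x| ≤ C / √((k : ℝ) + 1) := by
  obtain ⟨B, hB, hBE⟩ := berry_esseen
  set J := ∫ y in Set.Ioi (0 : ℝ), (y ^ 2 + 1) * rexp (-y) with hJ
  have hJ0 : 0 ≤ J := setIntegral_nonneg measurableSet_Ioi fun y _ => by positivity
  refine ⟨(B + D) + J / c, by positivity, fun k w hw => ?_⟩
  obtain ⟨h1, h2⟩ := mixture w c hc k
  set s := √((k : ℝ) + 1) with hs
  have hs0 : 0 < s := by positivity
  have hα : gPhi x = ∫ y in Set.Ioi (0 : ℝ), y * rexp (-y) * gPhi x := by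
    rw [integral_mul_const, int_ye_val, one_mul]
  rw [h1, hα, ← integral_sub h2 (int_ye.mul_const _)]
  have hg : IntegrableOn (fun y : ℝ => ((B + D) / s) * (y * rexp (-y)) + (1 / c / s) * ((y ^ 2 + 1) * rexp (-y)))
      (Set.Ioi 0) := (int_ye.const_mul _).add (int_y2e.const_mul _)
  have := norm_integral_le_of_norm_le hg (f := fun y => y * rexp (-y) * avg^[k] hstep ((w - Real.log y) / c)
      - y * rexp (-y) * gPhi x) (by
    refine (ae_restrict_iff' measurableSet_Ioi).2 (ae_of_all _ fun y hy => ?_)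
    have hy : 0 < y := hy
    have hb : |avg^[k] hstep ((w - Real.log y) / c) - gPhi x| ≤ (B + D) / s + |Real.log y| / c / s := by
      have a1 := hBE k ((w - Real.log y) / c)
      have a2 := gPhi_lip ((w - Real.log y) / c / s) x
      have a3 : |(w - Real.log y) / c / s - x| ≤ (D + |Real.log y| / c) / s := by
        rw [show (w - Real.log y) / c / s - x = ((w / c - x * s) - Real.log y / c) / s by field_simp; ring,
          abs_div, abs_of_pos hs0]
        gcongr
        refine (abs_sub _ _).trans ?_
        rw [abs_div, abs_of_pos hc]
        linarith
      have a4 := abs_sub_le (avg^[k] hstep ((w - Real.log y) / c)) (gPhi ((w - Real.log y) / c / s)) (gPhi x)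
      have : (B + D) / s + |Real.log y| / c / s = B / s + (D + |Real.log y| / c) / s := by ring
      rw [this]
      linarith
    rw [← mul_sub, Real.norm_eq_abs, abs_mul, abs_of_nonneg (by positivity)]
    calc _ ≤ y * rexp (-y) * ((B + D) / s + |Real.log y| / c / s) := by gcongr
      _ = (B + D) / s * (y * rexp (-y)) + 1 / c / s * ((y * |Real.log y|) * rexp (-y)) := by ring
      _ ≤ _ := by gcongr; exact abs_log_le y hy)
  rw [integral_add (int_ye.const_mul _) (int_y2e.const_mul _), integral_const_mul, integral_const_mul,
    int_ye_val, ← hJ] at this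
  refine this.trans (le_of_eq (by ring))

/-- Lemma 1 of Janson–Szpankowski: for `p ∈ (1/2, 1)`, if
`k = log_{1/√(pq)} λ - (ln(p/q) / (2 ln^{3/2}(1/√(pq)))) Φ⁻¹(α) √(ln λ) + O(1)`,
then `E X̄_k(λ) = α + O(k^{-1/2})`. -/
theorem expectation_fracFilledPo_near_alpha
    (p q α : ℝ) (hp : 1 / 2 < p) (hp1 : p < 1) (hq : q = 1 - p) (hα : 0 < α) (hα1 : α < 1)
    (ν : Measure (ℕ → ℕ → Bool)) (hν : IIDBits p ν)
    (xα : ℝ) (hxα : ProbabilityTheory.cdf (ProbabilityTheory.gaussianReal 0 1) xα = α) :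
    ∀ A > (0 : ℝ), ∃ C > (0 : ℝ), ∀ lam : NNReal, 3 ≤ lam → ∀ k : ℕ, 1 ≤ k →
      |(k : ℝ) -
          (Real.logb (1 / Real.sqrt (p * q)) lam -
            Real.log (p / q) / (2 * Real.log (1 / Real.sqrt (p * q)) ^ ((3 : ℝ) / 2))
              * xα * Real.sqrt (Real.log lam))| ≤ A →
        |(∫ ω, fracFilledPo k ω ∂poModel lam ν) - α| ≤ C / Real.sqrt k := by
  intro A hA
  have hp0 : 0 < p := by linarith
  have hq0 : 0 < q := by linarith
  have hpq : 1 < p / q := by rw [one_lt_div hq0]; linarith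
  set c := Real.log (p / q) / 2 with hc
  have hc0 : 0 < c := by have := Real.log_pos hpq; positivity
  set L := Real.log (1 / √(p * q)) with hL
  have hL0 : 0 < L := by
    apply Real.log_pos
    rw [one_lt_div (by positivity), Real.sqrt_lt' one_pos]
    nlinarith
  set β := c * xα / L with hβ
  set D := A * L / c + |xα| * (A + 1 + |β|) with hD
  obtain ⟨C, hC, H⟩ := mixture_bound c xα D hc0 (by positivity)
  refine ⟨C, hC, fun lam hlam k hk h => ?_⟩
  have hlam3 : (3 : ℝ) ≤ lam := by exact_mod_cast hlam
  have hl0 : 0 < (lam : ℝ) := by linarith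
  have hlog : 0 < Real.log lam := Real.log_pos (by linarith)
  rw [expect_eq p hp0.le hp1.le ν hν]
  have hr (r : Fin k → Bool) : (lam : ℝ) * wprob p r = rexp (Real.log lam - k * L + c * wsum r) := by
    rw [wprob_eq p q hp0 hq0 hq, ← hc, ← hL, show Real.log lam - k * L + c * wsum r
      = Real.log lam + (c * wsum r - k * L) by ring, Real.exp_add, Real.exp_log hl0]
  simp only [hr]
  have hα' : gPhi xα = α := hxα
  rw [← hα']
  set l := √(Real.log lam / L) with hl
  have hlpos : 0 < l := by positivity
  have hl2 : l ^ 2 = Real.log lam / L := Real.sq_sqrt (by positivity)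
  have hterm : Real.log (p / q) / (2 * L ^ ((3 : ℝ) / 2)) * xα * √(Real.log lam) = β * l := by
    have h32 : L ^ ((3 : ℝ) / 2) = L * √L := by
      rw [show (3 : ℝ) / 2 = 1 + 1 / 2 by norm_num, Real.rpow_add hL0, Real.rpow_one, Real.sqrt_eq_rpow]
    have : 0 < √L := by positivity
    rw [h32, hl, Real.sqrt_div hlog.le, hβ, hc]
    field_simp
  have hlogb : Real.logb (1 / √(p * q)) lam = l ^ 2 := by rw [hl2, Real.logb]
  rw [hterm, hlogb] at h
  set s := √((k : ℝ) + 1) with hs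
  have hs2 : s ^ 2 = k + 1 := Real.sq_sqrt (by positivity)
  have hs1 : 1 ≤ s := by rw [hs, Real.one_le_sqrt]; linarith [(Nat.cast_nonneg k : (0 : ℝ) ≤ k)]
  have hsl : |l - s| ≤ A + 1 + |β| := by
    have e : |l - s| * (l + s) ≤ A + 1 + |β| * l := by
      rw [← abs_of_pos (show 0 < l + s by linarith), ← abs_mul,
        show (l - s) * (l + s) = -((k : ℝ) - (l ^ 2 - β * l)) - 1 + β * l by linear_combination -hs2]
      refine (abs_add_le _ _).trans (add_le_add ((abs_sub _ _).trans ?_) ?_)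
      · rw [abs_neg]; simpa using h
      · rw [abs_mul, abs_of_pos hlpos]
    by_contra hcon
    push Not at hcon
    have : (A + 1 + |β|) * (l + s) < A + 1 + |β| * l :=
      lt_of_lt_of_le (mul_lt_mul_of_pos_right hcon (by linarith)) e
    nlinarith [abs_nonneg β, mul_nonneg (abs_nonneg β) (by linarith : (0 : ℝ) ≤ s),
      mul_pos (by linarith : 0 < A + 1) hlpos]
  have hw : |(Real.log lam - k * L) / c - xα * s| ≤ D := by
    have e1 : (Real.log lam - k * L) / c - xα * s
        = -(((k : ℝ) - (l ^ 2 - β * l)) * (L / c)) + xα * (l - s) := by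
      have : Real.log lam = l ^ 2 * L := by rw [hl2]; field_simp
      rw [this, hβ]; field_simp; ring
    rw [e1]
    refine (abs_add_le _ _).trans (add_le_add ?_ ?_)
    · rw [abs_neg, abs_mul, abs_of_pos (show 0 < L / c by positivity), mul_div_assoc]
      gcongr
    · rw [abs_mul]; gcongr
  refine (H k _ hw).trans ?_
  have hk0 : (0 : ℝ) < k := by exact_mod_cast hk
  gcongr
  linarith
end

section
/- Fix p ∈ (1/2, 1). There is a constant C > 0 such that for all λ > 1 and all positive integers k, |E X̄_k(λ) − P(Bin(k, 1/2) ≥ γ)| ≤ C k^{−1/2}, where γ = (k ln(1/q) − ln λ) / ln(p/q) and Bin(k, 1/2) denotes a binomial random variable with k trials and success probability 1/2. -/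
/-!
Poissonized model for partial fillup in tries (Janson–Szpankowski).

An outcome `ω : ℕ × (ℕ → ℕ → Bool)` consists of the number `ω.1 = N` of inserted
strings and a source `ω.2` of infinitely many strings, where `ω.2 i j` is the `j`-th
bit of the `i`-th string; the inserted strings are the strings `0, …, N-1`.  Under the
Poissonized measure, `N ~ Po(λ)` is independent of the strings, and all bits are
i.i.d. with `P(bit = 1) = p`.
-/

open MeasureTheory ProbabilityTheory Real Filter

/-- The tail probability `P(Bin(k, 1/2) ≥ γ)` of a binomial random variable with `k`
trials and success probability `1/2`, at a real threshold `γ`. -/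
noncomputable def binomialHalfTail (k : ℕ) (γ : ℝ) : ℝ :=
  ∑ j ∈ Finset.range (k + 1), if γ ≤ (j : ℝ) then (k.choose j : ℝ) * ((2 : ℝ) ^ k)⁻¹ else 0


lemma aux_cb (n : ℕ) : (n.centralBinom : ℝ)^2 * (2*n+1) ≤ 16^n := by
  induction n with
  | zero => simp
  | succ n ih =>
    have h : ((n:ℝ)+1) * (n+1).centralBinom = 2*(2*n+1)*n.centralBinom := by
      exact_mod_cast Nat.succ_mul_centralBinom_succ n
    set c : ℝ := (n.centralBinom : ℝ)
    set d : ℝ := ((n+1).centralBinom : ℝ)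
    have hn : (0:ℝ) ≤ n := by positivity
    have h1 : ((n:ℝ)+1)^2 * (d^2 * (2*(n+1)+1)) ≤ ((n:ℝ)+1)^2 * 16^(n+1) := by
      have : ((n:ℝ)+1)^2 * (d^2 * (2*(n+1)+1)) = (c^2*(2*n+1)) * (4*((2*n+1)*(2*n+3))) := by
        have : ((n:ℝ)+1)^2 * d^2 = (2*(2*n+1)*c)^2 := by rw [← h]; ring
        calc _ = (((n:ℝ)+1)^2 * d^2) * (2*(n+1)+1) := by ring
          _ = _ := by rw [this]; ring
      rw [this]
      calc _ ≤ (16:ℝ)^n * (4 * (4*(n+1)^2)) := by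
            refine mul_le_mul ih (by nlinarith) (by positivity) (by positivity)
        _ = _ := by ring
    have := le_of_mul_le_mul_left h1 (by positivity)
    push_cast; exact this

lemma aux_choose_sq (k j : ℕ) : (k.choose j : ℝ)^2 * k ≤ 4^k := by
  have hle : (k.choose j : ℝ) ≤ k.choose (k/2) := by exact_mod_cast Nat.choose_le_middle j k
  have h0 : (k.choose j : ℝ)^2 * k ≤ (k.choose (k/2) : ℝ)^2 * k := by gcongr
  refine h0.trans ?_
  obtain ⟨n, rfl | rfl⟩ := Nat.even_or_odd' k
  · have h := aux_cb n
    rw [Nat.mul_div_cancel_left _ (by norm_num), ← Nat.centralBinom_eq_two_mul_choose, pow_mul]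
    norm_num
    nlinarith [sq_nonneg (n.centralBinom : ℝ)]
  · have h := aux_cb (n+1)
    have e : (2*n+1)/2 = n := by omega
    have e2 : ((n+1).centralBinom : ℝ) = 2 * (2*n+1).choose n := by
      rw [Nat.centralBinom_eq_two_mul_choose]
      have : (2*(n+1)).choose (n+1) = (2*n+1).choose n + (2*n+1).choose (n+1) := by
        rw [show 2*(n+1) = (2*n+1)+1 by ring, Nat.choose_succ_succ]
      have h3 := Nat.choose_symm_half n
      rw [this, h3]; push_cast; ring
    rw [e]
    rw [e2] at h
    have : (4:ℝ)^(2*n+1) = 16^(n+1)/4 := by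
      rw [pow_succ, pow_mul, pow_succ]; norm_num; ring
    rw [this]
    push_cast at h ⊢
    nlinarith [sq_nonneg ((2*n+1).choose n : ℝ)]

lemma aux_choose (k j : ℕ) (hk : 1 ≤ k) : (k.choose j : ℝ) * ((2:ℝ)^k)⁻¹ ≤ 1 / Real.sqrt k := by
  have hk' : (0:ℝ) < k := by exact_mod_cast hk
  have hs : 0 < Real.sqrt k := Real.sqrt_pos.2 hk'
  rw [← div_eq_mul_inv, div_le_div_iff₀ (by positivity) hs, one_mul]
  refine abs_le_of_sq_le_sq' ?_ (by positivity) |>.2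
  rw [mul_pow, Real.sq_sqrt hk'.le, ← pow_mul, mul_comm k 2, pow_mul]
  norm_num
  exact aux_choose_sq k j

lemma aux_sum_up (b γ : ℝ) (hb : 0 < b) (hb1 : b < 1) (n : ℕ) :
    (∑ j ∈ Finset.range n, if γ ≤ (j:ℝ) then b^((j:ℝ)-γ) else 0) * (1-b) ≤
      max 0 (1 - b^((n:ℝ)-γ)) := by
  induction n with
  | zero => simp
  | succ n ih =>
    rw [Finset.sum_range_succ, add_mul]
    have e : b^(((n+1:ℕ):ℝ)-γ) = b^((n:ℝ)-γ) * b := by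
      rw [← Real.rpow_add_one hb.ne']; push_cast; ring_nf
    have hpos : 0 < b^((n:ℝ)-γ) := Real.rpow_pos_of_pos hb _
    rw [e]
    split_ifs with h
    · have : b^((n:ℝ)-γ) ≤ 1 := Real.rpow_le_one hb.le hb1.le (by linarith)
      rw [max_eq_right (by linarith)] at ih
      refine le_trans ?_ (le_max_right _ _)
      linarith
    · rw [zero_mul, add_zero]
      refine ih.trans (max_le_max le_rfl ?_)
      nlinarith

lemma aux_sum_down (b γ : ℝ) (hb : 0 < b) (hb1 : b < 1) (n : ℕ) :
    (∑ j ∈ Finset.range n, if γ ≤ (j:ℝ) then 0 else b^(γ-(j:ℝ))) * (1-b) ≤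
      min 1 (b^(γ-(n:ℝ)) * b) := by
  induction n with
  | zero =>
    simp; positivity
  | succ n ih =>
    rw [Finset.sum_range_succ, add_mul]
    have e : b^(γ-((n+1:ℕ):ℝ)) * b = b^(γ-(n:ℝ)) := by
      rw [← Real.rpow_add_one hb.ne']; push_cast; ring_nf
    have hpos : 0 < b^(γ-(n:ℝ)) := Real.rpow_pos_of_pos hb _
    rw [e]
    split_ifs with h
    · rw [zero_mul, add_zero]
      refine ih.trans (min_le_min le_rfl ?_)
      nlinarith
    · have : b^(γ-(n:ℝ)) ≤ 1 := Real.rpow_le_one hb.le hb1.le (by linarith)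
      rw [min_eq_right this]
      have := ih.trans (min_le_right _ _)
      linarith

lemma aux_f_upper (x : ℝ) (hx : 0 < x) : 1 - (1+x) * exp (-x) ≤ x := by
  have h := Real.add_one_le_exp (-x)
  nlinarith [mul_pos hx (Real.exp_pos (-x))]

lemma aux_f_nonneg (x : ℝ) (hx : 0 < x) : 0 ≤ 1 - (1+x) * exp (-x) := by
  have h := Real.add_one_le_exp x
  have h2 : exp x * exp (-x) = 1 := by rw [← Real.exp_add]; simp
  nlinarith [Real.exp_pos (-x)]

lemma aux_f_lower (x : ℝ) (hx : 0 < x) : (1+x) * exp (-x) ≤ 2 * x⁻¹ := by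
  have h := Real.quadratic_le_exp_of_nonneg hx.le
  have h2 : exp x * exp (-x) = 1 := by rw [← Real.exp_add]; simp
  rw [← div_eq_mul_inv, le_div_iff₀ hx]
  nlinarith [Real.exp_pos (-x)]

/-- analytic part -/
lemma aux_analytic (p q : ℝ) (hp : 1 / 2 < p) (hp1 : p < 1) (hq : q = 1 - p)
    (lam : ℝ) (hl : 1 < lam) (k : ℕ) (hk : 1 ≤ k) :
    |(∑ j ∈ Finset.range (k+1), (k.choose j : ℝ) * ((2:ℝ)^k)⁻¹ *
        (1 - (1 + lam * (p^j*q^(k-j))) * exp (-(lam * (p^j*q^(k-j)))))) -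
      binomialHalfTail k ((k * Real.log (1 / q) - Real.log lam) / Real.log (p / q))| ≤
      (3 / (1 - q/p)) / Real.sqrt k := by
  have hq0 : 0 < q := by linarith
  have hp0 : 0 < p := by linarith
  have hl0 : 0 < lam := by linarith
  have hb0 : 0 < q/p := by positivity
  have hb1 : q/p < 1 := by rw [div_lt_one hp0]; linarith
  set γ := (k * Real.log (1 / q) - Real.log lam) / Real.log (p / q) with hγ
  set b := q/p with hb
  have hlog : Real.log (p/q) = - Real.log b := by
    rw [hb, ← Real.log_inv, inv_div]
  have hlb : Real.log b < 0 := Real.log_neg hb0 hb1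
  have key : ∀ j ∈ Finset.range (k+1), lam * (p^j*q^(k-j)) = b^(γ - (j:ℝ)) := by
    intro j hj
    have hjk : j ≤ k := by simpa [Nat.lt_succ_iff] using hj
    have hγ2 : γ * Real.log b = Real.log lam - k * Real.log (1/q) := by
      have := hlb.ne; rw [hγ, hlog]; field_simp; ring
    have hpos : 0 < lam * (p^j*q^(k-j)) := by positivity
    rw [Real.rpow_def_of_pos hb0, ← Real.exp_log hpos]
    congr 1
    rw [Real.log_mul (by positivity) (by positivity), Real.log_mul (by positivity) (by positivity),
      Real.log_pow, Real.log_pow, Nat.cast_sub hjk, mul_sub, mul_comm (Real.log b) γ, hγ2, hb,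
      Real.log_div hq0.ne' hp0.ne', one_div, Real.log_inv]
    ring
  rw [binomialHalfTail, ← Finset.sum_sub_distrib]
  have hs : 0 ≤ 1 / Real.sqrt k := by positivity
  calc _ ≤ ∑ j ∈ Finset.range (k+1), (1 / Real.sqrt k) *
        (2 * (if γ ≤ (j:ℝ) then b^((j:ℝ)-γ) else 0) + (if γ ≤ (j:ℝ) then 0 else b^(γ-(j:ℝ)))) := by
        refine (Finset.abs_sum_le_sum_abs _ _).trans (Finset.sum_le_sum fun j hj => ?_)
        rw [key j hj]
        have hx : 0 < b^(γ-(j:ℝ)) := Real.rpow_pos_of_pos hb0 _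
        have hc := aux_choose k j hk
        have hc0 : 0 ≤ (k.choose j : ℝ) * ((2:ℝ)^k)⁻¹ := by positivity
        set c := (k.choose j : ℝ) * ((2:ℝ)^k)⁻¹
        have h1 := aux_f_upper _ hx
        have h2 := aux_f_nonneg _ hx
        have h3 := aux_f_lower _ hx
        have hinv : (b^(γ-(j:ℝ)))⁻¹ = b^((j:ℝ)-γ) := by
          rw [← Real.rpow_neg hb0.le, neg_sub]
        rw [hinv] at h3
        set x := b^(γ-(j:ℝ))
        split_ifs with h
        · have : c * (1 - (1+x)*exp (-x)) - c = -(c * ((1+x)*exp (-x))) := by ring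
          rw [this, abs_neg, abs_of_nonneg (by positivity), add_zero]
          exact mul_le_mul hc h3 (by positivity) hs
        · rw [sub_zero, abs_of_nonneg (by positivity), mul_zero, zero_add]
          exact mul_le_mul hc h1 h2 hs
    _ ≤ _ := by
        rw [← Finset.mul_sum, Finset.sum_add_distrib, ← Finset.mul_sum]
        have h1 := aux_sum_up b γ hb0 hb1 (k+1)
        have h2 := aux_sum_down b γ hb0 hb1 (k+1)
        have h1' := h1.trans (max_le zero_le_one (by
          have := Real.rpow_pos_of_pos hb0 (((k+1:ℕ):ℝ)-γ); linarith) : _ ≤ (1:ℝ))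
        have h2' := h2.trans (min_le_left _ _)
        rw [div_mul_eq_mul_div, one_mul]
        gcongr
        rw [le_div_iff₀ (by linarith)]
        linarith

/-- string `i` has prefix `r` -/
def prefEvent (k : ℕ) (r : Fin k → Bool) (i : ℕ) : Set (ℕ → ℕ → Bool) :=
  {ω | ∀ j : Fin k, ω i j = r j}

lemma measurableSet_prefEvent (k : ℕ) (r : Fin k → Bool) (i : ℕ) :
    MeasurableSet (prefEvent k r i) := by
  unfold prefEvent
  rw [Set.ofPred_forall]
  refine MeasurableSet.iInter fun j => ?_
  have : Measurable fun ω : ℕ → ℕ → Bool => ω i j := by fun_prop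
  exact this (measurableSet_singleton (r j))

/-- the probability of a word -/
noncomputable def wordProb (p : ℝ) (k : ℕ) (r : Fin k → Bool) : ℝ :=
  ∏ j : Fin k, if r j then p else 1 - p

lemma wordProb_eq (p : ℝ) (k : ℕ) (r : Fin k → Bool) :
    wordProb p k r = p ^ (Finset.univ.filter fun j => r j = true).card *
      (1-p) ^ (k - (Finset.univ.filter fun j => r j = true).card) := by
  unfold wordProb
  rw [Finset.prod_ite, Finset.prod_const, Finset.prod_const]
  congr 2
  have := Finset.card_filter_add_card_filter_not (s := (Finset.univ : Finset (Fin k))) (fun j => r j = true)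
  rw [Finset.card_univ, Fintype.card_fin] at this
  omega

lemma real_inter (p : ℝ) (hp0 : 0 ≤ p) (hp1 : p ≤ 1) (ν : Measure (ℕ → ℕ → Bool))
    (hν : IIDBits p ν) (k : ℕ) (r : Fin k → Bool) (S : Finset ℕ) :
    ν.real (⋂ i ∈ S, prefEvent k r i) = wordProb p k r ^ S.card := by
  have h := hν.2 (S ×ˢ Finset.range k) (fun s => if h : s.2 < k then r ⟨s.2, h⟩ else false)
  have e : (⋂ i ∈ S, prefEvent k r i) = {ω | ∀ s ∈ S ×ˢ Finset.range k,
      ω s.1 s.2 = (fun s : ℕ × ℕ => if h : s.2 < k then r ⟨s.2, h⟩ else false) s} := by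
    ext ω
    simp only [Set.mem_iInter, prefEvent, Set.mem_ofPred_eq, Finset.mem_product, Finset.mem_range]
    constructor
    · rintro h ⟨i, j⟩ ⟨hi, hj⟩
      simp only at hi hj ⊢
      rw [dif_pos hj]
      exact h i hi ⟨j, hj⟩
    · intro h i hi j
      have := h (i, j) ⟨hi, j.2⟩
      simpa using this
  rw [e, measureReal_def, h, ENNReal.toReal_prod, Finset.prod_product]
  rw [Finset.prod_congr rfl (g := fun _ => wordProb p k r), Finset.prod_const]
  intro i _
  rw [Finset.prod_range, wordProb]
  refine Finset.prod_congr rfl fun j _ => ?_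
  rw [ENNReal.toReal_ofReal]
  · simp
  · split_ifs <;> linarith

lemma real_inter_compl (p : ℝ) (hp0 : 0 ≤ p) (hp1 : p ≤ 1) (ν : Measure (ℕ → ℕ → Bool))
    (hν : IIDBits p ν) (k : ℕ) (r : Fin k → Bool) (T : Finset ℕ) : ∀ (S : Finset ℕ),
    Disjoint S T →
    ν.real ((⋂ i ∈ S, prefEvent k r i) ∩ ⋂ i ∈ T, (prefEvent k r i)ᶜ) =
      wordProb p k r ^ S.card * (1 - wordProb p k r) ^ T.card := by
  have := hν.1
  induction T using Finset.induction_on with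
  | empty => intro S _; simpa using real_inter p hp0 hp1 ν hν k r S
  | insert t T ht ih =>
    intro S hST
    rw [Finset.disjoint_insert_right] at hST
    have h1 := ih S hST.2
    have h2 := ih (insert t S) (by rw [Finset.disjoint_insert_left]; exact ⟨ht, hST.2⟩)
    rw [Finset.card_insert_of_notMem hST.1] at h2
    rw [Finset.card_insert_of_notMem ht]
    set E := (⋂ i ∈ S, prefEvent k r i) ∩ ⋂ i ∈ T, (prefEvent k r i)ᶜ with hE
    have h3 := measureReal_sdiff_add_inter (μ := ν) (s := E) (measurableSet_prefEvent k r t)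
    have e1 : (⋂ i ∈ S, prefEvent k r i) ∩ ⋂ i ∈ insert t T, (prefEvent k r i)ᶜ =
        E \ prefEvent k r t := by
      rw [Finset.set_biInter_insert, hE]; ext; simp; tauto
    have e2 : (⋂ i ∈ insert t S, prefEvent k r i) ∩ ⋂ i ∈ T, (prefEvent k r i)ᶜ =
        E ∩ prefEvent k r t := by
      rw [Finset.set_biInter_insert, hE]; ext; simp; tauto
    rw [e2] at h2
    rw [e1]
    rw [h1, h2] at h3
    linear_combination h3

lemma real_two_le (p : ℝ) (hp0 : 0 ≤ p) (hp1 : p ≤ 1) (ν : Measure (ℕ → ℕ → Bool))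
    (hν : IIDBits p ν) (k : ℕ) (r : Fin k → Bool) (n : ℕ) :
    ν.real {ω | 2 ≤ prefCount ω n k r} =
      1 - (1 - wordProb p k r)^n - n * wordProb p k r * (1 - wordProb p k r)^(n-1) := by
  have := hν.1
  classical
  have e0 : {ω | prefCount ω n k r = 0} = (⋂ i ∈ (∅ : Finset ℕ), prefEvent k r i) ∩
      ⋂ i ∈ Finset.range n, (prefEvent k r i)ᶜ := by
    ext ω
    simp [prefCount, prefEvent, Finset.filter_eq_empty_iff]
  let F : ℕ → Set (ℕ → ℕ → Bool) := fun a => (⋂ i ∈ ({a} : Finset ℕ), prefEvent k r i) ∩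
      ⋂ i ∈ (Finset.range n).erase a, (prefEvent k r i)ᶜ
  have hF : ∀ a, MeasurableSet (F a) := fun a =>
    (Finset.measurableSet_biInter _ fun i _ => measurableSet_prefEvent k r i).inter
      (Finset.measurableSet_biInter _ fun i _ => (measurableSet_prefEvent k r i).compl)
  have e1 : {ω | prefCount ω n k r = 1} = ⋃ a ∈ Finset.range n, F a := by
    ext ω
    simp only [prefCount, Set.mem_ofPred_eq, Finset.card_eq_one, Set.mem_iUnion, F, Set.mem_inter_iff,
      Set.mem_iInter, Finset.mem_singleton, Set.mem_compl_iff, prefEvent, Finset.mem_erase]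
    constructor
    · rintro ⟨a, ha⟩
      have hm := fun i => Finset.ext_iff.1 ha i
      simp only [Finset.mem_filter, Finset.mem_singleton] at hm
      refine ⟨a, ((hm a).2 rfl).1, ?_, ?_⟩
      · rintro i rfl; exact ((hm i).2 rfl).2
      · rintro i ⟨hi, hi2⟩ h; exact hi ((hm i).1 ⟨hi2, h⟩)
    · rintro ⟨a, ha, h1, h2⟩
      refine ⟨a, ?_⟩
      ext i
      simp only [Finset.mem_filter, Finset.mem_singleton]
      constructor
      · rintro ⟨hi, h⟩
        by_contra hne
        exact h2 i ⟨hne, hi⟩ h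
      · rintro rfl; exact ⟨ha, h1 i rfl⟩
  have hdisj : Set.PairwiseDisjoint (↑(Finset.range n)) F := by
    intro a ha b hb hab
    rw [Function.onFun, Set.disjoint_left]
    intro ω h1 h2
    simp only [F, Set.mem_inter_iff, Set.mem_iInter, Finset.mem_singleton, Set.mem_compl_iff,
      Finset.mem_erase] at h1 h2
    exact h2.2 a ⟨hab, by simpa using ha⟩ (h1.1 a rfl)
  have m0 : ν.real {ω | prefCount ω n k r = 0} = (1 - wordProb p k r)^n := by
    rw [e0, real_inter_compl p hp0 hp1 ν hν k r _ _ (Finset.disjoint_empty_left _)]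
    simp
  have m1 : ν.real {ω | prefCount ω n k r = 1} =
      n * wordProb p k r * (1 - wordProb p k r)^(n-1) := by
    rw [e1, measureReal_biUnion_finset hdisj (fun a _ => hF a)]
    rw [Finset.sum_congr rfl (g := fun _ => wordProb p k r * (1 - wordProb p k r)^(n-1))]
    · simp; ring
    · intro a ha
      simp only [F]
      rw [real_inter_compl p hp0 hp1 ν hν k r _ _ (by simp), Finset.card_erase_of_mem ha]
      simp
  have ms0 : MeasurableSet {ω | prefCount ω n k r = 0} := by
    rw [e0]
    exact (Finset.measurableSet_biInter _ fun i _ => measurableSet_prefEvent k r i).inter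
      (Finset.measurableSet_biInter _ fun i _ => (measurableSet_prefEvent k r i).compl)
  have ms1 : MeasurableSet {ω | prefCount ω n k r = 1} := by
    rw [e1]; exact Finset.measurableSet_biUnion _ fun a _ => hF a
  have e2 : {ω | 2 ≤ prefCount ω n k r} =
      ({ω | prefCount ω n k r = 0} ∪ {ω | prefCount ω n k r = 1})ᶜ := by
    ext ω; simp; omega
  rw [e2, probReal_compl_eq_one_sub (ms0.union ms1), measureReal_union _ ms1, m0, m1]
  · ring
  · rw [Set.disjoint_left]; intro ω h1 h2; simp at h1 h2; omega

lemma measurable_prefCount (n k : ℕ) (r : Fin k → Bool) :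
    Measurable fun ω : ℕ → ℕ → Bool => prefCount ω n k r := by
  classical
  have : (fun ω : ℕ → ℕ → Bool => prefCount ω n k r) = fun ω => ∑ i ∈ Finset.range n,
      (prefEvent k r i).indicator (fun _ => 1) ω := by
    funext ω
    rw [prefCount, Finset.card_filter]
    refine Finset.sum_congr rfl fun i _ => ?_
    simp [Set.indicator_apply, prefEvent]
  rw [this]
  refine Finset.measurable_sum _ fun i _ => ?_
  exact measurable_const.indicator (measurableSet_prefEvent k r i)

lemma measurableSet_two_le (k : ℕ) (r : Fin k → Bool) :
    MeasurableSet {ω : ℕ × (ℕ → ℕ → Bool) | 2 ≤ prefCount ω.2 ω.1 k r} := by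
  have : Measurable fun ω : ℕ × (ℕ → ℕ → Bool) => prefCount ω.2 ω.1 k r :=
    measurable_from_prod_countable_right fun n => measurable_prefCount n k r
  exact this (measurableSet_Ici (a := 2))

lemma poisson_calc (lam θ : ℝ) :
    HasSum (fun n : ℕ => (exp (-lam) * lam ^ n / n.factorial) •
      (1 - (1 - θ)^n - n * θ * (1 - θ)^(n-1))) (1 - (1 + lam*θ) * exp (-(lam*θ))) := by
  have hx : ∀ x : ℝ, HasSum (fun n : ℕ => x^n / n.factorial) (exp x) := fun x => by
    rw [Real.exp_eq_exp_ℝ]; exact NormedSpace.expSeries_div_hasSum_exp x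
  have h1 := (hx lam).mul_left (exp (-lam))
  have h2 := (hx (lam * (1-θ))).mul_left (exp (-lam))
  have h3 : HasSum (fun n : ℕ => exp (-lam) * (lam ^ n / n.factorial * (n * θ * (1 - θ)^(n-1))))
      (exp (-lam) * (lam * θ * exp (lam * (1-θ)))) := by
    refine HasSum.mul_left _ ?_
    rw [← hasSum_nat_add_iff' 1]
    simp only [Finset.sum_range_one, Nat.cast_zero, zero_mul, mul_zero, sub_zero]
    convert! (hx (lam * (1-θ))).mul_left (lam*θ) using 1
    funext n
    rw [Nat.factorial_succ, Nat.add_sub_cancel]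
    have : (n.factorial : ℝ) ≠ 0 := by positivity
    have : (n:ℝ) + 1 ≠ 0 := by positivity
    push_cast
    rw [mul_pow]
    field_simp
    ring
  convert! (h1.sub h2).sub h3 using 1
  · funext n; rw [smul_eq_mul, mul_pow]; ring
  · have e1 : exp (-lam) * exp lam = 1 := by rw [← Real.exp_add]; simp
    have e2 : exp (-lam) * exp (lam * (1-θ)) = exp (-(lam*θ)) := by
      rw [← Real.exp_add]; congr 1; ring
    linear_combination (1 + lam * θ) * e2 - e1

lemma poModel_two_le (p : ℝ) (hp0 : 0 ≤ p) (hp1 : p ≤ 1) (ν : Measure (ℕ → ℕ → Bool))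
    (hν : IIDBits p ν) (lam : NNReal) (k : ℕ) (r : Fin k → Bool) :
    (poModel lam ν).real {ω | 2 ≤ prefCount ω.2 ω.1 k r} =
      1 - (1 + lam * wordProb p k r) * exp (-(lam * wordProb p k r)) := by
  have := hν.1
  have ms := measurableSet_two_le k r
  rw [← integral_indicator_one ms, poModel, integral_prod]
  · have : ∀ n : ℕ, ∫ y, ({ω : ℕ × (ℕ → ℕ → Bool) | 2 ≤ prefCount ω.2 ω.1 k r}).indicator
        (1 : ℕ × (ℕ → ℕ → Bool) → ℝ) (n, y) ∂ν =
        1 - (1 - wordProb p k r)^n - n * wordProb p k r * (1 - wordProb p k r)^(n-1) := by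
      intro n
      have hm : MeasurableSet {ω | 2 ≤ prefCount ω n k r} :=
        measurable_prefCount n k r (measurableSet_Ici (a := 2))
      rw [← real_two_le p hp0 hp1 ν hν k r n, ← integral_indicator_one hm]
      rfl
    simp_rw [this]
    rw [integral_poissonMeasure]
    exact (poisson_calc lam (wordProb p k r)).tsum_eq
  · exact (integrable_const (1:ℝ)).indicator ms

lemma sum_words (k : ℕ) (g : ℕ → ℝ) :
    ∑ r : Fin k → Bool, g (Finset.univ.filter fun j => r j = true).card =
      ∑ j ∈ Finset.range (k+1), (k.choose j : ℝ) * g j := by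
  have h := Finset.sum_powerset_apply_card g (x := (Finset.univ : Finset (Fin k)))
  simp only [Finset.card_univ, Fintype.card_fin, nsmul_eq_mul] at h
  rw [← h]
  refine Finset.sum_bij' (fun r _ => Finset.univ.filter fun j => r j = true)
    (fun s _ => fun j => decide (j ∈ s)) ?_ ?_ ?_ ?_ ?_
  · simp
  · simp
  · intro r _; funext j; simp
  · intro s _; ext j; simp
  · simp

lemma expectation_eq (p : ℝ) (hp0 : 0 ≤ p) (hp1 : p ≤ 1) (ν : Measure (ℕ → ℕ → Bool))
    (hν : IIDBits p ν) (lam : NNReal) (k : ℕ) :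
    ∫ ω, fracFilledPo k ω ∂poModel lam ν =
      ∑ j ∈ Finset.range (k+1), (k.choose j : ℝ) * ((2:ℝ)^k)⁻¹ *
        (1 - (1 + lam * (p^j*(1-p)^(k-j))) * exp (-(lam * (p^j*(1-p)^(k-j))))) := by
  have := hν.1
  have hprob : IsProbabilityMeasure (poModel lam ν) := by unfold poModel; infer_instance
  have e : ∀ ω, fracFilledPo k ω = ∑ r : Fin k → Bool,
      ((2:ℝ)^k)⁻¹ * ({ω : ℕ × (ℕ → ℕ → Bool) | 2 ≤ prefCount ω.2 ω.1 k r}).indicator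
        (1 : ℕ × (ℕ → ℕ → Bool) → ℝ) ω := by
    intro ω
    rw [← Finset.mul_sum, fracFilledPo, fillCountPo, fillCount, Finset.card_filter, div_eq_inv_mul]
    push_cast
    congr 1
    refine Finset.sum_congr rfl fun r _ => ?_
    simp [Set.indicator_apply]
  simp_rw [e]
  rw [integral_finsetSum]
  · have : ∀ r : Fin k → Bool, ∫ ω, ((2:ℝ)^k)⁻¹ *
        ({ω : ℕ × (ℕ → ℕ → Bool) | 2 ≤ prefCount ω.2 ω.1 k r}).indicator
        (1 : ℕ × (ℕ → ℕ → Bool) → ℝ) ω ∂poModel lam ν =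
        (fun j : ℕ => ((2:ℝ)^k)⁻¹ *
        (1 - (1 + lam * (p^j*(1-p)^(k-j))) * exp (-(lam * (p^j*(1-p)^(k-j))))))
          (Finset.univ.filter fun j => r j = true).card := by
      intro r
      rw [integral_const_mul, integral_indicator_one (measurableSet_two_le k r),
        poModel_two_le p hp0 hp1 ν hν, wordProb_eq]
    rw [Finset.sum_congr rfl fun r _ => this r]
    refine (sum_words k (fun j : ℕ => ((2:ℝ)^k)⁻¹ *
        (1 - (1 + lam * (p^j*(1-p)^(k-j))) * exp (-(lam * (p^j*(1-p)^(k-j))))))).trans ?_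
    exact Finset.sum_congr rfl fun j _ => by ring
  · intro r _
    exact ((integrable_const (1:ℝ)).indicator (measurableSet_two_le k r)).const_mul _

/-- For `p ∈ (1/2, 1)`: `E X̄_k(λ) = P(Bin(k, 1/2) ≥ γ) + O(k^{-1/2})` uniformly, where
`γ = (k ln(1/q) - ln λ) / ln(p/q)`. -/
theorem expectation_fracFilledPo_binomial_approx
    (p q : ℝ) (hp : 1 / 2 < p) (hp1 : p < 1) (hq : q = 1 - p)
    (ν : Measure (ℕ → ℕ → Bool)) (hν : IIDBits p ν) :
    ∃ C > (0 : ℝ), ∀ lam : NNReal, 1 < lam → ∀ k : ℕ, 1 ≤ k →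
      |(∫ ω, fracFilledPo k ω ∂poModel lam ν) -
          binomialHalfTail k
            ((k * Real.log (1 / q) - Real.log lam) / Real.log (p / q))| ≤
        C / Real.sqrt k := by
  have hb1 : q/p < 1 := by rw [div_lt_one (by linarith)]; linarith
  refine ⟨3 / (1 - q/p), div_pos (by norm_num) (by linarith), fun lam hl k hk => ?_⟩
  rw [expectation_eq p (by linarith) hp1.le ν hν lam k, ← hq]
  exact aux_analytic p q hp hp1 hq lam (by exact_mod_cast hl) k hk
end

section
/- Fix p ∈ (0,1) with p ≠ 1/2. There is a constant C > 0 such that for every positive integer k, the function λ ↦ E X̄_k(λ) is differentiable on (0,∞) with (d/dλ) E X̄_k(λ) = λ^{−1} 2^{−k} Σ_{j=0}^{k} binom(k,j) (λ p^j q^{k−j})^2 e^{−λ p^j q^{k−j}}, and this derivative satisfies |(d/dλ) E X̄_k(λ)| ≤ C λ^{−1} k^{−1/2} for all λ > 0. -/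
/-!
Poissonized model for partial fillup in tries (Janson–Szpankowski).

An outcome `ω : ℕ × (ℕ → ℕ → Bool)` consists of the number `ω.1 = N` of inserted
strings and a source `ω.2` of infinitely many strings, where `ω.2 i j` is the `j`-th
bit of the `i`-th string; the inserted strings are the strings `0, …, N-1`.  Under the
Poissonized measure, `N ~ Po(λ)` is independent of the strings, and all bits are
i.i.d. with `P(bit = 1) = p`.
-/

open MeasureTheory ProbabilityTheory Real Filter

lemma trie_cb (n : ℕ) : (2 * n + 1) * n.centralBinom ^ 2 ≤ 16 ^ n := by
  induction n with
  | zero => simp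
  | succ n ih =>
    have h := Nat.succ_mul_centralBinom_succ n
    have h2 : (n + 1) ^ 2 * ((2 * (n + 1) + 1) * (n + 1).centralBinom ^ 2)
        = (2 * n + 3) * (2 * (2 * n + 1) * n.centralBinom) ^ 2 := by
      rw [← h]; ring
    have h3 : (n + 1) ^ 2 * ((2 * (n + 1) + 1) * (n + 1).centralBinom ^ 2)
        ≤ (n + 1) ^ 2 * 16 ^ (n + 1) := by
      rw [h2]
      calc (2 * n + 3) * (2 * (2 * n + 1) * n.centralBinom) ^ 2
          = 4 * ((2 * n + 3) * (2 * n + 1)) * ((2 * n + 1) * n.centralBinom ^ 2) := by ring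
        _ ≤ 4 * (4 * (n + 1) ^ 2) * 16 ^ n := by
          have hh : (2 * n + 3) * (2 * n + 1) ≤ 4 * (n + 1) ^ 2 := by nlinarith
          exact Nat.mul_le_mul (Nat.mul_le_mul_left 4 hh) ih
        _ = _ := by ring
    exact Nat.le_of_mul_le_mul_left h3 (by positivity)

lemma trie_mid (k : ℕ) : k * (k.choose (k / 2)) ^ 2 ≤ 4 ^ k := by
  rcases Nat.even_or_odd' k with ⟨n, rfl | rfl⟩
  · have h := trie_cb n
    rw [Nat.centralBinom_eq_two_mul_choose] at h
    rw [Nat.mul_div_cancel_left n two_pos, pow_mul]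
    norm_num
    nlinarith [Nat.zero_le ((2 * n).choose n ^ 2)]
  · have h := trie_cb (n + 1)
    rw [Nat.centralBinom_eq_two_mul_choose, show 2 * (n + 1) = (2 * n + 1) + 1 by ring,
      Nat.choose_succ_succ, ← Nat.choose_symm_half n] at h
    rw [show (2 * n + 1) / 2 = n by omega]
    have e : (4 : ℕ) ^ (2 * n + 1) = 4 * 16 ^ n := by
      rw [pow_succ, pow_mul]; norm_num; ring
    rw [e]
    rw [Nat.choose_symm_half n] at h
    rw [pow_succ 16 n] at h
    nlinarith [Nat.zero_le ((2 * n + 1).choose n ^ 2)]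

lemma trie_choose_le (k j : ℕ) (hk : 1 ≤ k) :
    ((2 : ℝ) ^ k)⁻¹ * (k.choose j : ℝ) ≤ 1 / Real.sqrt k := by
  have h1 : (k.choose j : ℝ) ≤ k.choose (k / 2) := by exact_mod_cast Nat.choose_le_middle j k
  have h2 : (k : ℝ) * (k.choose (k / 2) : ℝ) ^ 2 ≤ 4 ^ k := by exact_mod_cast trie_mid k
  have hk0 : (0 : ℝ) < k := by exact_mod_cast hk
  have h3 : Real.sqrt k * (k.choose (k / 2) : ℝ) ≤ 2 ^ k := by
    apply le_of_sq_le_sq _ (by positivity)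
    rw [mul_pow, Real.sq_sqrt hk0.le, ← pow_mul, mul_comm k 2, pow_mul]
    norm_num
    exact h2
  have hs : 0 < Real.sqrt k := Real.sqrt_pos.2 hk0
  rw [inv_mul_eq_div, div_le_div_iff₀ (by positivity) hs]
  nlinarith

lemma trie_g_le (ρ x : ℝ) (hρ : 1 < ρ) (hx : 0 < x) :
    x ^ 2 * Real.exp (-x) ≤
      6 * Real.exp 1 * ρ / (ρ - 1) * (ρ * x / (1 + ρ * x) - x / (1 + x)) := by
  have hr : 0 < ρ - 1 := by linarith
  have h6 : (1 + x) ^ 3 / 6 ≤ Real.exp (1 + x) := by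
    have := Real.pow_div_factorial_le_exp (1 + x) (by positivity) 3
    simpa [Nat.factorial] using this
  rw [Real.exp_add] at h6
  have e : 6 * Real.exp 1 * ρ / (ρ - 1) * (ρ * x / (1 + ρ * x) - x / (1 + x))
      = 6 * Real.exp 1 * ρ * x / ((1 + ρ * x) * (1 + x)) := by
    have : 1 + ρ * x ≠ 0 := by positivity
    have : 1 + x ≠ 0 := by positivity
    field_simp
    ring
  rw [e, le_div_iff₀ (by positivity), Real.exp_neg]
  have hE := Real.exp_pos x
  rw [← sub_nonneg]
  have h7 : x * ((1 + ρ * x) * (1 + x)) ≤ ρ * (1 + x) ^ 3 := by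
    have : (1 + ρ * x) ≤ ρ * (1 + x) := by linarith
    calc x * ((1 + ρ * x) * (1 + x)) ≤ (1 + x) * ((ρ * (1 + x)) * (1 + x)) := by
          gcongr; linarith
      _ = _ := by ring
  have h8 : x * ((1 + ρ * x) * (1 + x)) ≤ 6 * Real.exp 1 * ρ * Real.exp x := by
    nlinarith
  have h9 : x ^ 2 * (Real.exp x)⁻¹ * ((1 + ρ * x) * (1 + x))
      = x * (x * ((1 + ρ * x) * (1 + x))) / Real.exp x := by field_simp
  rw [h9, sub_nonneg, div_le_iff₀ hE]
  nlinarith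

lemma trie_geom (ρ a : ℝ) (hρ : 1 < ρ) (ha : 0 < a) (n : ℕ) :
    ∑ j ∈ Finset.range n, (a * ρ ^ j) ^ 2 * Real.exp (-(a * ρ ^ j)) ≤
      6 * Real.exp 1 * ρ / (ρ - 1) := by
  have hr : 0 < ρ - 1 := by linarith
  have hρ0 : 0 < ρ := by linarith
  calc ∑ j ∈ Finset.range n, (a * ρ ^ j) ^ 2 * Real.exp (-(a * ρ ^ j))
      ≤ ∑ j ∈ Finset.range n, 6 * Real.exp 1 * ρ / (ρ - 1) *
        ((a * ρ ^ (j + 1)) / (1 + a * ρ ^ (j + 1)) - (a * ρ ^ j) / (1 + a * ρ ^ j)) := by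
        refine Finset.sum_le_sum fun j _ => ?_
        have := trie_g_le ρ (a * ρ ^ j) hρ (by positivity)
        rwa [show ρ * (a * ρ ^ j) = a * ρ ^ (j + 1) by ring] at this
    _ = 6 * Real.exp 1 * ρ / (ρ - 1) *
        ((a * ρ ^ n) / (1 + a * ρ ^ n) - (a * ρ ^ 0) / (1 + a * ρ ^ 0)) := by
        rw [← Finset.mul_sum, Finset.sum_range_sub (fun j => (a * ρ ^ j) / (1 + a * ρ ^ j))]
    _ ≤ 6 * Real.exp 1 * ρ / (ρ - 1) * 1 := by
        gcongr
        have h1 : (a * ρ ^ n) / (1 + a * ρ ^ n) ≤ 1 := by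
          rw [div_le_one (by positivity)]; linarith
        have h2 : 0 ≤ (a * ρ ^ 0) / (1 + a * ρ ^ 0) := by positivity
        linarith
    _ = _ := mul_one _

lemma trie_sum_lt (p q lam : ℝ) (hq : 0 < q) (hqp : q < p) (hl : 0 < lam) (k : ℕ) :
    ∑ j ∈ Finset.range (k + 1), (lam * p ^ j * q ^ (k - j)) ^ 2 *
      Real.exp (-(lam * p ^ j * q ^ (k - j))) ≤
      6 * Real.exp 1 * (p / q) / (p / q - 1) := by
  refine le_trans (le_of_eq ?_) (trie_geom (p / q) (lam * q ^ k) ?_ (by positivity) (k + 1))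
  · refine Finset.sum_congr rfl fun j hj => ?_
    have hj' : j ≤ k := by simpa [Nat.lt_succ_iff] using hj
    have : lam * p ^ j * q ^ (k - j) = lam * q ^ k * (p / q) ^ j := by
      rw [pow_sub₀ q hq.ne' hj', div_pow]
      field_simp
    rw [this]
  · rwa [one_lt_div hq]

lemma trie_sum (p q : ℝ) (hp : 0 < p) (hq : 0 < q) (hpq : p ≠ q) :
    ∃ C > (0 : ℝ), ∀ k : ℕ, ∀ lam : ℝ, 0 < lam →
      ∑ j ∈ Finset.range (k + 1), (lam * p ^ j * q ^ (k - j)) ^ 2 *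
      Real.exp (-(lam * p ^ j * q ^ (k - j))) ≤ C := by
  rcases lt_or_gt_of_ne hpq with h | h
  · refine ⟨6 * Real.exp 1 * (q / p) / (q / p - 1), ?_, fun k lam hl => ?_⟩
    · have : 0 < q / p - 1 := by rw [sub_pos, one_lt_div hp]; exact h
      positivity
    · refine le_trans (le_of_eq ?_) (trie_sum_lt q p lam hp h hl k)
      rw [← Finset.sum_range_reflect]
      refine Finset.sum_congr rfl fun j hj => ?_
      have hj' : j ≤ k := by simpa [Nat.lt_succ_iff] using hj
      have e : k + 1 - 1 - j = k - j := by omega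
      have e2 : k - (k - j) = j := by omega
      rw [e, e2, mul_right_comm]
  · refine ⟨6 * Real.exp 1 * (p / q) / (p / q - 1), ?_, fun k lam hl => trie_sum_lt p q lam hq h hl k⟩
    have : 0 < p / q - 1 := by rw [sub_pos, one_lt_div hq]; exact h
    positivity

lemma trie_bound (p q : ℝ) (hp : 0 < p) (hq : 0 < q) (hpq : p ≠ q) :
    ∃ C > (0 : ℝ), ∀ k : ℕ, 1 ≤ k → ∀ lam : ℝ, 0 < lam →
      |lam⁻¹ * ((2 : ℝ) ^ k)⁻¹ *
            ∑ j ∈ Finset.range (k + 1),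
              (k.choose j : ℝ) * (lam * p ^ j * q ^ (k - j)) ^ 2 *
                Real.exp (-(lam * p ^ j * q ^ (k - j)))| ≤
          C * lam⁻¹ / Real.sqrt k := by
  obtain ⟨C, hC, h⟩ := trie_sum p q hp hq hpq
  refine ⟨C, hC, fun k hk lam hl => ?_⟩
  rw [abs_of_nonneg (by positivity)]
  have : ((2 : ℝ) ^ k)⁻¹ * ∑ j ∈ Finset.range (k + 1),
              (k.choose j : ℝ) * (lam * p ^ j * q ^ (k - j)) ^ 2 *
                Real.exp (-(lam * p ^ j * q ^ (k - j))) ≤ 1 / Real.sqrt k * C := by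
    calc _ ≤ 1 / Real.sqrt k * ∑ j ∈ Finset.range (k + 1), (lam * p ^ j * q ^ (k - j)) ^ 2 *
                Real.exp (-(lam * p ^ j * q ^ (k - j))) := by
          rw [Finset.mul_sum, Finset.mul_sum]
          refine Finset.sum_le_sum fun j _ => ?_
          rw [mul_assoc (k.choose j : ℝ), ← mul_assoc]
          exact mul_le_mul_of_nonneg_right (trie_choose_le k j hk) (by positivity)
      _ ≤ _ := by gcongr; exact h k lam hl
  rw [mul_assoc]
  calc _ ≤ lam⁻¹ * (1 / Real.sqrt k * C) := by gcongr
    _ = _ := by ring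

lemma trie_po (l θ : ℝ) :
    HasSum (fun n : ℕ => (Real.exp (-l) * l ^ n / (n.factorial : ℝ)) *
      (1 - ((1 - θ) ^ n + n * (θ * (1 - θ) ^ (n - 1)))))
      (1 - (1 + l * θ) * Real.exp (-(l * θ))) := by
  have key : ∀ x : ℝ, HasSum (fun n : ℕ => x ^ n / (n.factorial : ℝ)) (Real.exp x) := by
    intro x
    rw [Real.exp_eq_exp_ℝ]
    exact NormedSpace.expSeries_div_hasSum_exp x
  have h1 := (key l).mul_left (Real.exp (-l))
  have h2 := (key (l * (1 - θ))).mul_left (Real.exp (-l))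
  have h3 : HasSum (fun n : ℕ => Real.exp (-l) * l ^ n / (n.factorial : ℝ) *
      (n * (θ * (1 - θ) ^ (n - 1)))) (Real.exp (-l) * l * θ * Real.exp (l * (1 - θ))) := by
    rw [← hasSum_nat_add_iff' 1]
    simp only [Finset.range_one, Finset.sum_singleton, Nat.cast_zero, zero_mul, mul_zero, sub_zero]
    convert! (key (l * (1 - θ))).mul_left (Real.exp (-l) * l * θ) using 2 with n
    rw [Nat.factorial_succ]
    push_cast
    have : ((n : ℝ) + 1) ≠ 0 := by positivity
    have : (n.factorial : ℝ) ≠ 0 := by positivity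
    rw [mul_pow]
    field_simp
    ring
  convert! (h1.sub h2).sub h3 using 1
  · funext n
    rw [mul_pow]; ring
  · have e1 : Real.exp (-l) * Real.exp l = 1 := by rw [← Real.exp_add]; simp
    have e2 : Real.exp (-l) * Real.exp (l * (1 - θ)) = Real.exp (-(l * θ)) := by
      rw [← Real.exp_add]; ring_nf
    rw [e1, e2, ← e2]; ring

lemma trie_group (k : ℕ) (p q : ℝ) (f : ℝ → ℝ) :
    ∑ r : Fin k → Bool, f (∏ j, if r j then p else q) =
      ∑ j ∈ Finset.range (k + 1), (k.choose j : ℝ) * f (p ^ j * q ^ (k - j)) := by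
  have h := Finset.sum_powerset_apply_card (fun m => f (p ^ m * q ^ (k - m)))
    (x := (Finset.univ : Finset (Fin k)))
  simp only [Finset.card_univ, Fintype.card_fin, nsmul_eq_mul] at h
  rw [← h]
  refine Finset.sum_bij' (fun r _ => Finset.univ.filter fun j => r j = true)
    (fun s _ j => decide (j ∈ s)) ?_ ?_ ?_ ?_ ?_
  · simp
  · simp
  · intro r _; funext j; simp
  · intro s _; ext j; simp
  · intro r _
    rw [Finset.prod_ite, Finset.prod_const, Finset.prod_const]
    congr 3
    have := Finset.card_filter_add_card_filter_not (s := (Finset.univ : Finset (Fin k)))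
      (fun j => r j = true)
    rw [Finset.card_univ, Fintype.card_fin] at this
    omega

lemma trie_deriv (k : ℕ) (p q lam : ℝ) (hl : 0 < lam) :
    HasDerivAt (fun l : ℝ => ((2 : ℝ) ^ k)⁻¹ * ∑ j ∈ Finset.range (k + 1), (k.choose j : ℝ) *
      (1 - (1 + l * (p ^ j * q ^ (k - j))) * Real.exp (-(l * (p ^ j * q ^ (k - j))))))
      (lam⁻¹ * ((2 : ℝ) ^ k)⁻¹ *
            ∑ j ∈ Finset.range (k + 1),
              (k.choose j : ℝ) * (lam * p ^ j * q ^ (k - j)) ^ 2 *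
                Real.exp (-(lam * p ^ j * q ^ (k - j)))) lam := by
  have key : ∀ θ : ℝ, HasDerivAt (fun l : ℝ => 1 - (1 + l * θ) * Real.exp (-(l * θ)))
      (lam⁻¹ * (lam * θ) ^ 2 * Real.exp (-(lam * θ))) lam := by
    intro θ
    have h0 : HasDerivAt (fun l : ℝ => l * θ) θ lam := hasDerivAt_mul_const θ
    have := ((h0.const_add 1).mul h0.neg.exp).const_sub 1
    convert! this using 1
    simp only [Pi.neg_apply]
    field_simp
    ring
  have := (HasDerivAt.fun_sum (u := Finset.range (k + 1))
    fun j _ => (key (p ^ j * q ^ (k - j))).const_mul (k.choose j : ℝ)).const_mul ((2 : ℝ) ^ k)⁻¹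
  convert! this using 1
  rw [mul_comm lam⁻¹, mul_assoc, Finset.mul_sum]
  congr 1
  refine Finset.sum_congr rfl fun j _ => ?_
  rw [mul_assoc lam]; ring

/-- the event that string `i` starts with `r` -/
def trieA (k : ℕ) (r : Fin k → Bool) (i : ℕ) : Set (ℕ → ℕ → Bool) :=
  {w | ∀ j : Fin k, w i j = r j}

lemma trieA_meas (k : ℕ) (r : Fin k → Bool) (i : ℕ) : MeasurableSet (trieA k r i) := by
  have : trieA k r i = ⋂ j : Fin k, {w | w i j = r j} := by ext; simp [trieA]
  rw [this]
  refine MeasurableSet.iInter fun j => ?_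
  have hm : Measurable fun w : ℕ → ℕ → Bool => w i j := by fun_prop
  exact hm (measurableSet_singleton (r j))

lemma trie_inter (p : ℝ) (ν : Measure (ℕ → ℕ → Bool)) (hν : IIDBits p ν) (k : ℕ)
    (r : Fin k → Bool) (s : Finset ℕ) :
    ν (⋂ i ∈ s, trieA k r i) =
      ∏ _i ∈ s, ∏ j : Fin k, ENNReal.ofReal (if r j then p else 1 - p) := by
  have h := hν.2 (s ×ˢ Finset.range k) (fun x => if h : x.2 < k then r ⟨x.2, h⟩ else true)
  have e : {ω : ℕ → ℕ → Bool | ∀ x ∈ s ×ˢ Finset.range k, ω x.1 x.2 =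
      (if h : x.2 < k then r ⟨x.2, h⟩ else true)} = ⋂ i ∈ s, trieA k r i := by
    ext w
    simp only [trieA, Set.mem_ofPred_eq, Set.mem_iInter, Finset.mem_product, Finset.mem_range]
    constructor
    · intro h i hi j
      have := h (i, j) ⟨hi, j.2⟩
      simpa using this
    · rintro h ⟨i, j⟩ ⟨hi, hj⟩
      simp only at hi hj ⊢
      rw [dif_pos hj]
      exact h i hi ⟨j, hj⟩
  rw [e, Finset.prod_product] at h
  rw [h]
  refine Finset.prod_congr rfl fun i _ => ?_
  rw [Finset.prod_range]
  refine Finset.prod_congr rfl fun j _ => ?_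
  simp

lemma trie_indep (p : ℝ) (ν : Measure (ℕ → ℕ → Bool)) (hν : IIDBits p ν) (k : ℕ)
    (r : Fin k → Bool) : iIndepSet (trieA k r) ν := by
  rw [iIndepSet_iff_meas_biInter (trieA_meas k r)]
  intro s
  rw [trie_inter p ν hν]
  refine Finset.prod_congr rfl fun i _ => ?_
  have := trie_inter p ν hν k r {i}
  simpa using this.symm

lemma trieA_real (p : ℝ) (hp : 0 < p) (hp1 : p < 1) (ν : Measure (ℕ → ℕ → Bool))
    (hν : IIDBits p ν) (k : ℕ)
    (r : Fin k → Bool) (i : ℕ) :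
    ν.real (trieA k r i) = ∏ j : Fin k, (if r j then p else 1 - p) := by
  have := trie_inter p ν hν k r {i}
  simp only [Finset.mem_singleton, Set.iInter_iInter_eq_left, Finset.prod_singleton] at this
  rw [measureReal_def, this, ENNReal.toReal_prod]
  refine Finset.prod_congr rfl fun j _ => ?_
  rw [ENNReal.toReal_ofReal]
  split_ifs <;> linarith

lemma prefCount_meas (n k : ℕ) (r : Fin k → Bool) :
    Measurable fun w : ℕ → ℕ → Bool => prefCount w n k r := by
  have : (fun w : ℕ → ℕ → Bool => prefCount w n k r) =
      fun w => ∑ i ∈ Finset.range n, (trieA k r i).indicator (fun _ => (1 : ℕ)) w := by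
    classical
    funext w
    rw [prefCount, Finset.card_filter]
    refine Finset.sum_congr rfl fun i _ => ?_
    simp [Set.indicator_apply, trieA]
  rw [this]
  exact Finset.measurable_fun_sum _ fun i _ => measurable_const.indicator (trieA_meas k r i)

lemma prefCount_le_one (w : ℕ → ℕ → Bool) (n k : ℕ) (r : Fin k → Bool) :
    ¬ 2 ≤ prefCount w n k r ↔ (∀ i ∈ Finset.range n, w ∉ trieA k r i) ∨
      ∃ i ∈ Finset.range n, w ∈ trieA k r i ∧
        ∀ i' ∈ (Finset.range n).erase i, w ∉ trieA k r i' := by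
  have : ¬ 2 ≤ prefCount w n k r ↔ prefCount w n k r = 0 ∨ prefCount w n k r = 1 := by omega
  rw [this]
  refine or_congr ?_ ?_
  · rw [prefCount, Finset.card_eq_zero, Finset.filter_eq_empty_iff]
    rfl
  · rw [prefCount, Finset.card_eq_one]
    refine exists_congr fun i => ?_
    rw [Finset.ext_iff]
    simp only [Finset.mem_filter, Finset.mem_singleton, Finset.mem_erase]
    change (∀ a, a ∈ Finset.range n ∧ w ∈ trieA k r a ↔ a = i) ↔ _
    constructor
    · intro h
      have hi := (h i).2 rfl
      exact ⟨hi.1, hi.2, fun i' hi' hw => hi'.1 ((h i').1 ⟨hi'.2, hw⟩)⟩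
    · rintro ⟨h1, h2, h3⟩ a
      constructor
      · rintro ⟨ha, hw⟩
        by_contra hne
        exact h3 a ⟨hne, ha⟩ hw
      · rintro rfl; exact ⟨h1, h2⟩

lemma trie_real_ge_two (p : ℝ) (hp : 0 < p) (hp1 : p < 1) (ν : Measure (ℕ → ℕ → Bool))
    (hν : IIDBits p ν) (n k : ℕ) (r : Fin k → Bool) :
    ν.real {w | 2 ≤ prefCount w n k r} =
      1 - ((1 - ∏ j : Fin k, (if r j then p else 1 - p)) ^ n +
        n * ((∏ j : Fin k, (if r j then p else 1 - p)) *
          (1 - ∏ j : Fin k, (if r j then p else 1 - p)) ^ (n - 1))) := by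
  classical
  have := hν.1
  set θ := ∏ j : Fin k, (if r j then p else 1 - p) with hθ
  have hA : ∀ i, ν.real (trieA k r i) = θ := trieA_real p hp hp1 ν hν k r
  have hAc : ∀ i, ν.real (trieA k r i)ᶜ = 1 - θ := fun i => by
    rw [probReal_compl_eq_one_sub (trieA_meas k r i), hA]
  have hind := (iIndepSet_iff_iIndep _ _).1 (trie_indep p ν hν k r)
  have hgen : ∀ (s : Finset ℕ) (f : ℕ → Set (ℕ → ℕ → Bool)),
      (∀ i ∈ s, f i = trieA k r i ∨ f i = (trieA k r i)ᶜ) →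
      ν.real (⋂ i ∈ s, f i) = ∏ i ∈ s, ν.real (f i) := by
    intro s f hf
    have := hind.meas_biInter (S := s) (s := f) (fun i hi => by
      have hb : MeasurableSet[MeasurableSpace.generateFrom {trieA k r i}] (trieA k r i) :=
        MeasurableSpace.measurableSet_generateFrom rfl
      rcases hf i hi with h | h
      · rw [h]; exact hb
      · rw [h]; exact hb.compl)
    simp only [measureReal_def]
    rw [this, ENNReal.toReal_prod]
  have hmeas : MeasurableSet {w : ℕ → ℕ → Bool | 2 ≤ prefCount w n k r} :=
    prefCount_meas n k r (measurableSet_Ici (a := 2))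
  set Z : Set (ℕ → ℕ → Bool) := ⋂ i ∈ Finset.range n, (trieA k r i)ᶜ with hZ
  set O : ℕ → Set (ℕ → ℕ → Bool) := fun i => ⋂ i' ∈ Finset.range n,
    (if i' = i then trieA k r i' else (trieA k r i')ᶜ) with hO
  have hAc_meas := fun i => (trieA_meas k r i).compl
  have hOm : ∀ i, MeasurableSet (O i) := fun i =>
    Finset.measurableSet_biInter _ fun i' _ => by
      split_ifs
      · exact trieA_meas k r i'
      · exact hAc_meas i'
  have hcompl : {w : ℕ → ℕ → Bool | 2 ≤ prefCount w n k r}ᶜ =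
      Z ∪ ⋃ i ∈ Finset.range n, O i := by
    ext w
    rw [Set.mem_compl_iff, Set.mem_ofPred_eq, prefCount_le_one, Set.mem_union]
    refine or_congr ?_ ?_
    · simp [hZ]
    · simp only [Set.mem_iUnion, exists_prop]
      refine exists_congr fun i => and_congr_right fun hi => ?_
      simp only [hO, Set.mem_iInter]
      constructor
      · rintro ⟨h1, h2⟩ i' hi'
        split_ifs with h
        · rw [h]; exact h1
        · exact h2 i' (Finset.mem_erase.2 ⟨h, hi'⟩)
      · intro h
        refine ⟨by simpa using h i hi, fun i' hi' => ?_⟩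
        rw [Finset.mem_erase] at hi'
        have := h i' hi'.2
        rw [if_neg hi'.1] at this
        exact this
  have hOi : ∀ i ∈ Finset.range n, O i ⊆ trieA k r i := by
    intro i hi w hw
    simp only [hO, Set.mem_iInter] at hw
    simpa using hw i hi
  have hdisj1 : Disjoint Z (⋃ i ∈ Finset.range n, O i) := by
    rw [Set.disjoint_left]
    intro w hw hw'
    simp only [Set.mem_iUnion, exists_prop] at hw'
    obtain ⟨i, hi, hw'⟩ := hw'
    simp only [hZ, Set.mem_iInter] at hw
    exact hw i hi (hOi i hi hw')
  have hdisj2 : (↑(Finset.range n) : Set ℕ).PairwiseDisjoint O := by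
    intro a ha b hb hab
    rw [Function.onFun, Set.disjoint_left]
    intro w hwa hwb
    have h1 := hOi a ha hwa
    simp only [hO, Set.mem_iInter] at hwb
    have h2 := hwb a ha
    rw [if_neg hab] at h2
    exact h2 h1
  have hZr : ν.real Z = (1 - θ) ^ n := by
    rw [hZ, hgen _ _ (fun i _ => Or.inr rfl)]
    simp [hAc]
  have hOr : ∀ i ∈ Finset.range n, ν.real (O i) = θ * (1 - θ) ^ (n - 1) := by
    intro i hi
    rw [hO]
    simp only
    rw [hgen _ _ (fun i' _ => by split_ifs <;> simp), ← Finset.mul_prod_erase _ _ hi]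
    rw [if_pos rfl, hA]
    congr 1
    rw [Finset.prod_congr rfl (g := fun _ => 1 - θ)]
    · rw [Finset.prod_const, Finset.card_erase_of_mem hi, Finset.card_range]
    · intro i' hi'
      rw [if_neg (Finset.mem_erase.1 hi').1, hAc]
  have h := probReal_compl_eq_one_sub (μ := ν) hmeas
  rw [hcompl, measureReal_union hdisj1 (Finset.measurableSet_biUnion _ fun i _ => hOm i)
      (measure_ne_top _ _) (measure_ne_top _ _),
    measureReal_biUnion_finset hdisj2 (fun i _ => hOm i), hZr, Finset.sum_congr rfl hOr] at h
  simp only [Finset.sum_const, Finset.card_range, nsmul_eq_mul] at h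
  linarith

lemma frac_eq (k n : ℕ) (w : ℕ → ℕ → Bool) : fracFilledPo k (n, w) =
    ((2 : ℝ) ^ k)⁻¹ * ∑ r : Fin k → Bool,
      {w : ℕ → ℕ → Bool | 2 ≤ prefCount w n k r}.indicator (fun _ => (1 : ℝ)) w := by
  classical
  rw [fracFilledPo, fillCountPo, fillCount, Finset.card_filter, div_eq_inv_mul]
  push_cast
  congr 1
  refine Finset.sum_congr rfl fun r _ => ?_
  simp [Set.indicator_apply]

lemma frac_meas (k n : ℕ) : Measurable fun w => fracFilledPo k (n, w) := by
  simp_rw [frac_eq]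
  refine Measurable.const_mul (Finset.measurable_fun_sum _ fun r _ => ?_) _
  exact measurable_const.indicator (prefCount_meas n k r (measurableSet_Ici (a := 2)))

lemma frac_integrable (k : ℕ) (l : NNReal) (ν : Measure (ℕ → ℕ → Bool))
    [IsProbabilityMeasure ν] : Integrable (fracFilledPo k) (poModel l ν) := by
  have hm : Measurable (fracFilledPo k) := measurable_from_prod_countable_right fun n => frac_meas k n
  have : IsProbabilityMeasure (poModel l ν) := by unfold poModel; infer_instance
  refine Integrable.of_bound hm.aestronglyMeasurable 1 (Eventually.of_forall fun ω => ?_)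
  rw [fracFilledPo, Real.norm_of_nonneg (by positivity), div_le_one (by positivity)]
  have : fillCountPo k ω ≤ 2 ^ k := by
    refine (Finset.card_le_univ _).trans ?_
    simp
  exact_mod_cast this

lemma trie_expect (p : ℝ) (hp : 0 < p) (hp1 : p < 1) (ν : Measure (ℕ → ℕ → Bool))
    (hν : IIDBits p ν) (k : ℕ) (l : ℝ) (hl : 0 < l) :
    ∫ ω, fracFilledPo k ω ∂poModel l.toNNReal ν =
      ((2 : ℝ) ^ k)⁻¹ * ∑ j ∈ Finset.range (k + 1), (k.choose j : ℝ) *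
      (1 - (1 + l * (p ^ j * (1 - p) ^ (k - j))) *
        Real.exp (-(l * (p ^ j * (1 - p) ^ (k - j))))) := by
  have := hν.1
  rw [← trie_group k p (1 - p) (fun θ => 1 - (1 + l * θ) * Real.exp (-(l * θ)))]
  have hint := frac_integrable k l.toNNReal ν
  unfold poModel at hint ⊢
  rw [integral_prod _ hint, integral_poissonMeasure]
  refine HasSum.tsum_eq ?_
  have hin : ∀ n, ∫ w, fracFilledPo k (n, w) ∂ν = ((2 : ℝ) ^ k)⁻¹ * ∑ r : Fin k → Bool,
      ν.real {w | 2 ≤ prefCount w n k r} := by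
    intro n
    simp_rw [frac_eq]
    have hm : ∀ r, MeasurableSet {w : ℕ → ℕ → Bool | 2 ≤ prefCount w n k r} := fun r =>
      prefCount_meas n k r (measurableSet_Ici (a := 2))
    rw [integral_const_mul, integral_finsetSum]
    · congr 1
      refine Finset.sum_congr rfl fun r _ => ?_
      rw [integral_indicator_const _ (hm r)]; simp
    · intro r _
      exact (integrable_const _).indicator (hm r)
  simp_rw [hin, trie_real_ge_two p hp hp1 ν hν, Real.coe_toNNReal l hl.le, smul_eq_mul]
  have := (hasSum_sum (s := (Finset.univ : Finset (Fin k → Bool))) fun r _ =>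
    trie_po l (∏ j, if r j then p else 1 - p)).mul_left ((2 : ℝ) ^ k)⁻¹
  convert! this using 1
  funext n
  rw [← Finset.mul_sum]
  ring

/-- Lemma 3 of Janson–Szpankowski: for `p ≠ 1/2`, the map `λ ↦ E X̄_k(λ)` is
differentiable with derivative
`λ⁻¹ 2^{-k} Σ_j C(k,j) (λ p^j q^{k-j})² e^{-λ p^j q^{k-j}}`, which is `O(λ⁻¹ k^{-1/2})`. -/
theorem deriv_expectation_fracFilledPo
    (p q : ℝ) (hp : 0 < p) (hp1 : p < 1) (hp2 : p ≠ 1 / 2) (hq : q = 1 - p)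
    (ν : Measure (ℕ → ℕ → Bool)) (hν : IIDBits p ν) :
    ∃ C > (0 : ℝ), ∀ k : ℕ, 1 ≤ k → ∀ lam : ℝ, 0 < lam →
      HasDerivAt
          (fun l : ℝ => ∫ ω, fracFilledPo k ω ∂poModel l.toNNReal ν)
          (lam⁻¹ * ((2 : ℝ) ^ k)⁻¹ *
            ∑ j ∈ Finset.range (k + 1),
              (k.choose j : ℝ) * (lam * p ^ j * q ^ (k - j)) ^ 2 *
                Real.exp (-(lam * p ^ j * q ^ (k - j))))
          lam ∧
        |lam⁻¹ * ((2 : ℝ) ^ k)⁻¹ *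
            ∑ j ∈ Finset.range (k + 1),
              (k.choose j : ℝ) * (lam * p ^ j * q ^ (k - j)) ^ 2 *
                Real.exp (-(lam * p ^ j * q ^ (k - j)))| ≤
          C * lam⁻¹ / Real.sqrt k := by
  subst hq
  obtain ⟨C, hC, h⟩ := trie_bound p (1 - p) hp (by linarith) (fun h => hp2 (by linarith))
  refine ⟨C, hC, fun k hk lam hl => ⟨?_, h k hk lam hl⟩⟩
  refine (trie_deriv k p (1 - p) lam hl).congr_of_eventuallyEq ?_
  filter_upwards [lt_mem_nhds hl] with l hl'
  exact trie_expect p hp hp1 ν hν k l hl'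
end
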